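/- arXiv:1602.06376 — 3 statements merged into one kernel-verified Lean document; each statement's English description precedes it below -/
import Mathlib

section
/- Let n = 1 and let g : ℝ → ℝ be a smooth function. Define u(x,t) = (e^{-t/2}/2) ∫_{x-t}^{x+t} I_0((1/2)√(t² − (x−y)²)) g(y) dy for t > 0. Then u is smooth on ℝ × (0,∞), satisfies the damped wave equation ∂²u/∂t² − ∂²u/∂x² + ∂u/∂t = 0 on ℝ × (0,∞), and for every x ∈ ℝ one has u(x,t) → 0 and ∂u/∂t(x,t) → g(x) as t → 0⁺. -/
open Real Set Filter MeasureTheory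
open scoped Nat Topology

noncomputable section

/-- The modified Bessel function of integer order `ν`:
`I_ν(s) = Σ_{j=0}^∞ (1/(j! (j+ν)!)) (s/2)^{2j+ν}` (note `Γ(j+ν+1) = (j+ν)!`). -/
def besselI (ν : ℕ) (s : ℝ) : ℝ :=
  ∑' j : ℕ, (1 / ((j ! : ℝ) * ((j + ν)! : ℝ))) * (s / 2) ^ (2 * j + ν)

section ParametricIntegral

variable {E F : Type} [NormedAddCommGroup E] [NormedSpace ℝ E] [ProperSpace E]
  [NormedAddCommGroup F] [NormedSpace ℝ F]

lemma hasFDerivAt_intervalIntegral_of_contDiff {K : E × ℝ → F} (hK : ContDiff ℝ 1 K)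
    (a b : ℝ) (p : E) :
    HasFDerivAt (fun p => ∫ y in a..b, K (p, y))
      (∫ y in a..b, (fderiv ℝ K (p, y)).comp (ContinuousLinearMap.inl ℝ E ℝ)) p := by
  have hc : Continuous fun q : E × ℝ =>
      (fderiv ℝ K q).comp (ContinuousLinearMap.inl ℝ E ℝ) :=
    (hK.continuous_fderiv one_ne_zero).clm_comp continuous_const
  obtain ⟨C, hC⟩ := ((isCompact_closedBall p 1).prod
    (isCompact_uIcc (a := a) (b := b))).exists_bound_of_continuousOn hc.continuousOn
  refine intervalIntegral.hasFDerivAt_integral_of_dominated_of_fderiv_le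
    (F' := fun p y => (fderiv ℝ K (p, y)).comp (ContinuousLinearMap.inl ℝ E ℝ))
    (bound := fun _ => C) (Metric.closedBall_mem_nhds p one_pos) ?_ ?_ ?_ ?_ ?_ ?_
  · exact Eventually.of_forall fun q =>
      (hK.continuous.comp (by fun_prop : Continuous fun y : ℝ => (q, y))).aestronglyMeasurable
  · exact (hK.continuous.comp (by fun_prop : Continuous fun y : ℝ => (p, y))).intervalIntegrable _ _
  · exact (hc.comp (by fun_prop : Continuous fun y : ℝ => (p, y))).aestronglyMeasurable
  · exact ae_of_all _ fun y hy q hq => hC (q, y) ⟨hq, uIoc_subset_uIcc hy⟩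
  · exact intervalIntegrable_const
  · refine ae_of_all _ fun y _ q _ => ?_
    exact ((hK.differentiable one_ne_zero) (q, y)).hasFDerivAt.comp q (hasFDerivAt_prodMk_left q y)

lemma contDiff_intervalIntegral_nat (n : ℕ) (a b : ℝ) :
    ∀ {F : Type} [NormedAddCommGroup F] [NormedSpace ℝ F] {K : E × ℝ → F},
      ContDiff ℝ n K → ContDiff ℝ n fun p => ∫ y in a..b, K (p, y) := by
  induction n with
  | zero =>
    intro F _ _ K hK
    rw [Nat.cast_zero, contDiff_zero] at hK ⊢
    exact intervalIntegral.continuous_parametric_intervalIntegral_of_continuous' (by exact hK) a b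
  | succ n ih =>
    intro F _ _ K hK
    have h1 : ContDiff ℝ 1 K := hK.of_le (by norm_cast; omega)
    have hd := hasFDerivAt_intervalIntegral_of_contDiff h1 a b
    rw [Nat.cast_add, Nat.cast_one, contDiff_succ_iff_fderiv]
    refine ⟨fun p => (hd p).differentiableAt, by simp, ?_⟩
    rw [funext fun p => (hd p).fderiv]
    exact ih (K := fun q => (fderiv ℝ K q).comp (ContinuousLinearMap.inl ℝ E ℝ))
      ((hK.fderiv_right (m := n) (by norm_cast)).clm_comp contDiff_const)

lemma contDiff_intervalIntegral {K : E × ℝ → F} {a b : E → ℝ} (hK : ContDiff ℝ (⊤ : ℕ∞) K)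
    (ha : ContDiff ℝ (⊤ : ℕ∞) a) (hb : ContDiff ℝ (⊤ : ℕ∞) b) :
    ContDiff ℝ (⊤ : ℕ∞) fun p => ∫ y in a p..b p, K (p, y) := by
  have hsub : (fun p => ∫ y in a p..b p, K (p, y)) =
      fun p => (b p - a p) • ∫ s in (0 : ℝ)..1, K (p, a p + (b p - a p) * s) := by
    funext p
    rw [intervalIntegral.smul_integral_comp_add_mul (fun y => K (p, y))]
    simp
  rw [hsub]
  refine (hb.sub ha).smul (contDiff_infty.2 fun n => ?_)
  refine contDiff_intervalIntegral_nat n 0 1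
    (K := fun q : E × ℝ => K (q.1, a q.1 + (b q.1 - a q.1) * q.2))
    (ContDiff.of_le (n := (⊤ : ℕ∞)) ?_ (by exact_mod_cast le_top))
  fun_prop

/-- The Leibniz integral rule with variable endpoints. -/
lemma hasDerivAt_intervalIntegral_of_contDiff {K K' : ℝ → ℝ → ℝ} {a b : ℝ → ℝ} {a' b' p : ℝ}
    (hK : ContDiff ℝ (⊤ : ℕ∞) fun q : ℝ × ℝ => K q.1 q.2)
    (hK' : ∀ p y, HasDerivAt (fun p => K p y) (K' p y) p)
    (ha : HasDerivAt a a' p) (hb : HasDerivAt b b' p) :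
    HasDerivAt (fun p => ∫ y in a p..b p, K p y)
      ((∫ y in a p..b p, K' p y) + b' * K p (b p) - a' * K p (a p)) p := by
  let Φ : ℝ × ℝ → ℝ := fun q => ∫ y in (0 : ℝ)..q.2, K q.1 y
  have hKc (p : ℝ) : Continuous (K p) :=
    hK.continuous.comp (by fun_prop : Continuous fun y : ℝ => (p, y))
  have hKi (p c d : ℝ) : IntervalIntegrable (K p) volume c d := (hKc p).intervalIntegrable _ _
  have hK'e : K' = fun p y => fderiv ℝ (fun q : ℝ × ℝ => K q.1 q.2) (p, y) (1, 0) := by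
    funext p y
    refine (hK' p y).unique ?_
    have h := ((hK.differentiable (by simp)) (p, y)).hasFDerivAt.comp_hasDerivAt p
      ((hasDerivAt_id p).prodMk (hasDerivAt_const p y))
    exact h
  have hK'c (p : ℝ) : Continuous (K' p) := by
    rw [hK'e]
    exact ((hK.continuous_fderiv (by simp)).comp
      (by fun_prop : Continuous fun y : ℝ => (p, y))).clm_apply continuous_const
  have hK'i (p c d : ℝ) : IntervalIntegrable (K' p) volume c d := (hK'c p).intervalIntegrable _ _
  have hΦ : ContDiff ℝ (⊤ : ℕ∞) Φ :=
    contDiff_intervalIntegral (K := fun r : (ℝ × ℝ) × ℝ => K r.1.1 r.2)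
      (hK.comp (by fun_prop : ContDiff ℝ (⊤ : ℕ∞) fun r : (ℝ × ℝ) × ℝ => (r.1.1, r.2)))
      contDiff_const contDiff_snd
  have hΦd (q : ℝ × ℝ) : HasFDerivAt Φ (fderiv ℝ Φ q) q :=
    ((hΦ.differentiable (by simp)) q).hasFDerivAt
  have h2 (q : ℝ × ℝ) : fderiv ℝ Φ q (0, 1) = K q.1 q.2 := by
    have h := (hΦd q).comp_hasDerivAt q.2
      ((hasDerivAt_const q.2 q.1).prodMk (hasDerivAt_id q.2))
    exact h.unique (intervalIntegral.integral_hasDerivAt_right (hKi _ _ _)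
      ((hKc _).stronglyMeasurableAtFilter _ _) (hKc _).continuousAt)
  have h1 (q : ℝ × ℝ) : fderiv ℝ Φ q (1, 0) = ∫ y in (0 : ℝ)..q.2, K' q.1 y := by
    have h := (hΦd q).comp_hasDerivAt q.1
      ((hasDerivAt_id q.1).prodMk (hasDerivAt_const q.1 q.2))
    refine h.unique ?_
    have h' := (hasFDerivAt_intervalIntegral_of_contDiff (hK.of_le (by simp)) 0 q.2
      q.1).hasDerivAt
    refine h'.congr_deriv ?_
    have hc : Continuous fun y : ℝ => (fderiv ℝ (fun q : ℝ × ℝ => K q.1 q.2) (q.1, y)).comp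
        (ContinuousLinearMap.inl ℝ ℝ ℝ) :=
      ((hK.continuous_fderiv (by simp)).comp
        (by fun_prop : Continuous fun y : ℝ => (q.1, y))).clm_comp continuous_const
    rw [ContinuousLinearMap.intervalIntegral_apply (hc.intervalIntegrable _ _), hK'e]
    simp
  have hcomp {c : ℝ → ℝ} {c' : ℝ} (hc : HasDerivAt c c' p) :
      HasDerivAt (fun p => ∫ y in (0 : ℝ)..c p, K p y)
        ((∫ y in (0 : ℝ)..c p, K' p y) + c' * K p (c p)) p := by
    have h := (hΦd (p, c p)).comp_hasDerivAt p ((hasDerivAt_id p).prodMk hc)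
    refine h.congr_deriv ?_
    have : ((1 : ℝ), c') = (1, 0) + c' • (0, 1) := by simp
    rw [this, map_add, map_smul, h1, h2, smul_eq_mul]
  refine (((hcomp hb).sub (hcomp ha)).congr_of_eventuallyEq ?_).congr_deriv ?_
  · exact .of_forall fun p =>
      (intervalIntegral.integral_interval_sub_left (hKi _ _ _) (hKi _ _ _)).symm
  · rw [← intervalIntegral.integral_interval_sub_left (hK'i p 0 (b p)) (hK'i p 0 (a p))]
    ring

end ParametricIntegral

/-- The entire function `s ↦ Σ_j s^j / (j! (j+k)!)`, so that
`I_k(s) = (s/2)^k * besselSeries k (s^2/4)`. -/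
def besselSeries (k : ℕ) (s : ℝ) : ℝ :=
  ∑' j : ℕ, s ^ j / ((j ! : ℝ) * ((j + k)! : ℝ))

lemma summable_besselSeries (k : ℕ) (s : ℝ) :
    Summable fun j : ℕ => s ^ j / ((j ! : ℝ) * ((j + k)! : ℝ)) := by
  refine .of_norm_bounded (Real.summable_pow_div_factorial |s|) fun j => ?_
  rw [norm_div, norm_pow, norm_mul, Real.norm_eq_abs, Real.norm_natCast, Real.norm_natCast]
  have h : (1 : ℝ) ≤ ((j + k)! : ℝ) := by exact_mod_cast (j + k).factorial_pos
  gcongr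
  exact le_mul_of_one_le_right (by positivity) h

lemma hasDerivAt_besselSeries (k : ℕ) (s : ℝ) :
    HasDerivAt (besselSeries k) (besselSeries (k + 1) s) s := by
  set R : ℝ := |s| + 1 with hR
  let g' : ℕ → ℝ → ℝ := fun j y => j * y ^ (j - 1) / ((j ! : ℝ) * ((j + k)! : ℝ))
  have hshift (y : ℝ) (j : ℕ) :
      g' (j + 1) y = y ^ j / ((j ! : ℝ) * ((j + (k + 1))! : ℝ)) := by
    have h : j + 1 + k = j + (k + 1) := by ring
    simp only [g', h, Nat.factorial_succ j, Nat.add_sub_cancel]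
    push_cast
    have := Nat.factorial_ne_zero j
    have := Nat.factorial_ne_zero (j + (k + 1))
    field_simp
  have hs' (y : ℝ) : Summable fun j => g' j y := by
    rw [← summable_nat_add_iff 1]
    simpa only [hshift] using summable_besselSeries (k + 1) y
  have h := hasDerivAt_tsum_of_isPreconnected (u := fun j => g' j R) (t := Metric.ball 0 R)
    (g := fun (j : ℕ) (y : ℝ) => y ^ j / ((j ! : ℝ) * ((j + k)! : ℝ))) (g' := g')
    (y₀ := s) (y := s) (hs' R) Metric.isOpen_ball (convex_ball _ _).isPreconnected
    (fun j y _ => (hasDerivAt_pow j y).div_const _) (fun j y hy => ?_) ?_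
    (summable_besselSeries k s) ?_
  · refine h.congr_deriv ?_
    rw [(hs' s).tsum_eq_zero_add]
    simp only [hshift]
    simp [g', besselSeries]
  · have hy' : |y| ≤ R := by simpa using (mem_ball_zero_iff.1 hy).le
    simp only [g', norm_div, norm_mul, norm_pow, Real.norm_eq_abs, Nat.abs_cast]
    gcongr
  all_goals simp [hR]

lemma contDiff_besselSeries (k : ℕ) : ContDiff ℝ (⊤ : ℕ∞) (besselSeries k) := by
  refine contDiff_infty.2 fun n => ?_
  induction n generalizing k with
  | zero =>
    exact contDiff_zero.2 (continuous_iff_continuousAt.2 fun s =>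
      (hasDerivAt_besselSeries k s).continuousAt)
  | succ n ih =>
    rw [Nat.cast_add, Nat.cast_one, contDiff_succ_iff_deriv]
    refine ⟨fun s => (hasDerivAt_besselSeries k s).differentiableAt, by simp, ?_⟩
    rw [funext fun s => (hasDerivAt_besselSeries k s).deriv]
    exact ih (k + 1)

@[fun_prop]
lemma ContDiff.besselSeries_comp {E : Type*} [NormedAddCommGroup E] [NormedSpace ℝ E] {f : E → ℝ}
    (k : ℕ) (hf : ContDiff ℝ (⊤ : ℕ∞) f) :
    ContDiff ℝ (⊤ : ℕ∞) fun x => besselSeries k (f x) :=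
  (contDiff_besselSeries k).comp hf

lemma besselSeries_zero_zero : besselSeries 0 0 = 1 := by
  rw [besselSeries, tsum_eq_single 0 fun j hj => by simp [hj]]
  simp

lemma besselSeries_ode (s : ℝ) :
    besselSeries 1 s + s * besselSeries 2 s = besselSeries 0 s := by
  have h0 := summable_besselSeries 0 s
  have h1 := summable_besselSeries 1 s
  have h2 := summable_besselSeries 2 s
  simp only [besselSeries]
  rw [h0.tsum_eq_zero_add, h1.tsum_eq_zero_add, ← tsum_mul_left, add_assoc,
    ← ((summable_nat_add_iff 1).2 h1).tsum_add (h2.mul_left s)]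
  refine congrArg₂ (· + ·) (by simp) (tsum_congr fun j => ?_)
  have e1 : j + 1 + 1 = j + 2 := rfl
  have e0 : j + 1 + 0 = j + 1 := rfl
  rw [e1, e0, Nat.factorial_succ (j + 1), Nat.factorial_succ j]
  push_cast
  have := Nat.factorial_ne_zero j
  field_simp
  ring

lemma besselI_zero_half_sqrt {s : ℝ} (hs : 0 ≤ s) :
    besselI 0 ((1 / 2) * Real.sqrt s) = besselSeries 0 (s / 16) := by
  refine tsum_congr fun j => ?_
  have h : ((1 / 2) * Real.sqrt s / 2) ^ (2 * j + 0) = (s / 16) ^ j := by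
    rw [add_zero, pow_mul, div_pow, mul_pow, Real.sq_sqrt hs]
    congr 1
    ring
  rw [h]
  ring

section WaveKernel

/-- The kernel `(x,t,y) ↦ I₀(√(t² - (x-y)²)/2)`, and its analogues for the derivatives of `I₀`. -/
def waveKernel (k : ℕ) (x t y : ℝ) : ℝ := besselSeries k ((t ^ 2 - (x - y) ^ 2) / 16)

@[fun_prop]
lemma ContDiff.waveKernel_comp {E : Type*} [NormedAddCommGroup E] [NormedSpace ℝ E]
    {f₁ f₂ f₃ : E → ℝ} (k : ℕ) (h₁ : ContDiff ℝ (⊤ : ℕ∞) f₁) (h₂ : ContDiff ℝ (⊤ : ℕ∞) f₂)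
    (h₃ : ContDiff ℝ (⊤ : ℕ∞) f₃) :
    ContDiff ℝ (⊤ : ℕ∞) fun p => waveKernel k (f₁ p) (f₂ p) (f₃ p) := by
  unfold waveKernel
  fun_prop

lemma hasDerivAt_waveKernel_time (k : ℕ) (x t y : ℝ) :
    HasDerivAt (fun t => waveKernel k x t y) (t / 8 * waveKernel (k + 1) x t y) t := by
  have h := (hasDerivAt_besselSeries k ((t ^ 2 - (x - y) ^ 2) / 16)).comp t
    ((((hasDerivAt_id t).pow 2).sub_const ((x - y) ^ 2)).div_const 16)
  refine h.congr_deriv ?_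
  simp only [waveKernel, id]
  ring

lemma hasDerivAt_waveKernel_space (k : ℕ) (x t y : ℝ) :
    HasDerivAt (fun x => waveKernel k x t y) (-(x - y) / 8 * waveKernel (k + 1) x t y) x := by
  have h := (hasDerivAt_besselSeries k ((t ^ 2 - (x - y) ^ 2) / 16)).comp x
    (((((hasDerivAt_id x).sub_const y).pow 2).const_sub (t ^ 2)).div_const 16)
  refine h.congr_deriv ?_
  simp only [waveKernel, id]
  ring

lemma waveKernel_add (k : ℕ) (x t : ℝ) : waveKernel k x t (x + t) = besselSeries k 0 := by
  simp [waveKernel]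

lemma waveKernel_sub (k : ℕ) (x t : ℝ) : waveKernel k x t (x - t) = besselSeries k 0 := by
  simp [waveKernel]

lemma waveKernel_ode (x t y : ℝ) :
    waveKernel 1 x t y + (t ^ 2 - (x - y) ^ 2) / 16 * waveKernel 2 x t y = waveKernel 0 x t y :=
  besselSeries_ode _

variable {g : ℝ → ℝ}

/-- The unnormalised solution `∫_{x-t}^{x+t} I₀(√(t² - (x-y)²)/2) g(y) dy` of the Klein-Gordon type
equation `J_tt - J_xx = J/4`. -/
def waveIntegral (g : ℝ → ℝ) (x t : ℝ) : ℝ := ∫ y in (x - t)..(x + t), waveKernel 0 x t y * g y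

lemma contDiff_waveIntegral (hg : ContDiff ℝ (⊤ : ℕ∞) g) :
    ContDiff ℝ (⊤ : ℕ∞) fun p : ℝ × ℝ => waveIntegral g p.1 p.2 :=
  contDiff_intervalIntegral (K := fun q : (ℝ × ℝ) × ℝ => waveKernel 0 q.1.1 q.1.2 q.2 * g q.2)
    (by fun_prop) (by fun_prop) (by fun_prop)

lemma hasDerivAt_waveIntegral_time (hg : ContDiff ℝ (⊤ : ℕ∞) g) (x t : ℝ) :
    HasDerivAt (waveIntegral g x)
      ((∫ y in (x - t)..(x + t), t / 8 * waveKernel 1 x t y * g y) + g (x + t) + g (x - t)) t := by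
  refine (hasDerivAt_intervalIntegral_of_contDiff
    (K := fun t y => waveKernel 0 x t y * g y) (by fun_prop)
    (fun t y => (hasDerivAt_waveKernel_time 0 x t y).mul_const (g y))
    ((hasDerivAt_id t).const_sub x) ((hasDerivAt_id t).const_add x)).congr_deriv ?_
  simp [waveKernel_add, waveKernel_sub, besselSeries_zero_zero]

lemma hasDerivAt_waveIntegral_space (hg : ContDiff ℝ (⊤ : ℕ∞) g) (x t : ℝ) :
    HasDerivAt (fun x => waveIntegral g x t)
      ((∫ y in (x - t)..(x + t), -(x - y) / 8 * waveKernel 1 x t y * g y)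
        + g (x + t) - g (x - t)) x := by
  refine (hasDerivAt_intervalIntegral_of_contDiff
    (K := fun x y => waveKernel 0 x t y * g y) (by fun_prop)
    (fun x y => (hasDerivAt_waveKernel_space 0 x t y).mul_const (g y))
    ((hasDerivAt_id x).sub_const t) ((hasDerivAt_id x).add_const t)).congr_deriv ?_
  simp [waveKernel_add, waveKernel_sub, besselSeries_zero_zero]

lemma contDiff_waveIntegral_time (hg : ContDiff ℝ (⊤ : ℕ∞) g) (x : ℝ) :
    ContDiff ℝ (⊤ : ℕ∞) (waveIntegral g x) :=
  contDiff_intervalIntegral (K := fun q : ℝ × ℝ => waveKernel 0 x q.1 q.2 * g q.2)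
    (by fun_prop) (by fun_prop) (by fun_prop)

lemma contDiff_deriv_waveIntegral_time (hg : ContDiff ℝ (⊤ : ℕ∞) g) (x : ℝ) :
    ContDiff ℝ (⊤ : ℕ∞) (deriv (waveIntegral g x)) :=
  (contDiff_infty_iff_deriv.1 (contDiff_waveIntegral_time hg x)).2

lemma deriv_deriv_waveIntegral_time (hg : ContDiff ℝ (⊤ : ℕ∞) g) (x t : ℝ) :
    deriv (deriv (waveIntegral g x)) t =
      (∫ y in (x - t)..(x + t),
        (1 / 8 * waveKernel 1 x t y + t ^ 2 / 64 * waveKernel 2 x t y) * g y)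
      + t / 8 * besselSeries 1 0 * (g (x + t) + g (x - t))
      + deriv g (x + t) - deriv g (x - t) := by
  have hgd (z : ℝ) : HasDerivAt g (deriv g z) z := ((hg.differentiable (by simp)) z).hasDerivAt
  have hK (t y : ℝ) : HasDerivAt (fun t => t / 8 * waveKernel 1 x t y * g y)
      ((1 / 8 * waveKernel 1 x t y + t ^ 2 / 64 * waveKernel 2 x t y) * g y) t := by
    refine ((((hasDerivAt_id t).div_const 8).mul
      (hasDerivAt_waveKernel_time 1 x t y)).mul_const (g y)).congr_deriv ?_
    simp only [id]
    ring
  have h := ((hasDerivAt_intervalIntegral_of_contDiff (by fun_prop) hK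
    ((hasDerivAt_id' t).const_sub x) ((hasDerivAt_id' t).const_add x)).fun_add
    ((hgd (x + t)).comp_const_add x t)).fun_add ((hgd (x - t)).comp_const_sub x t)
  rw [funext fun t => (hasDerivAt_waveIntegral_time hg x t).deriv, h.deriv, waveKernel_add,
    waveKernel_sub]
  ring

lemma deriv_deriv_waveIntegral_space (hg : ContDiff ℝ (⊤ : ℕ∞) g) (x t : ℝ) :
    deriv (deriv fun x => waveIntegral g x t) x =
      (∫ y in (x - t)..(x + t),
        (-1 / 8 * waveKernel 1 x t y + (x - y) ^ 2 / 64 * waveKernel 2 x t y) * g y)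
      + t / 8 * besselSeries 1 0 * (g (x + t) + g (x - t))
      + deriv g (x + t) - deriv g (x - t) := by
  have hgd (z : ℝ) : HasDerivAt g (deriv g z) z := ((hg.differentiable (by simp)) z).hasDerivAt
  have hK (x y : ℝ) : HasDerivAt (fun x => -(x - y) / 8 * waveKernel 1 x t y * g y)
      ((-1 / 8 * waveKernel 1 x t y + (x - y) ^ 2 / 64 * waveKernel 2 x t y) * g y) x := by
    refine (((((hasDerivAt_id' x).sub_const y).fun_neg.div_const 8).mul
      (hasDerivAt_waveKernel_space 1 x t y)).mul_const (g y)).congr_deriv ?_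
    ring
  have h := ((hasDerivAt_intervalIntegral_of_contDiff (by fun_prop) hK
    ((hasDerivAt_id' x).sub_const t) ((hasDerivAt_id' x).add_const t)).fun_add
    ((hgd (x + t)).comp_add_const x t)).fun_sub ((hgd (x - t)).comp_sub_const x t)
  rw [funext fun x => (hasDerivAt_waveIntegral_space hg x t).deriv, h.deriv, waveKernel_add,
    waveKernel_sub]
  ring

lemma waveIntegral_klein_gordon (hg : ContDiff ℝ (⊤ : ℕ∞) g) (x t : ℝ) :
    deriv (deriv (waveIntegral g x)) t - deriv (deriv fun x => waveIntegral g x t) x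
      = waveIntegral g x t / 4 := by
  have h : (∫ y in (x - t)..(x + t),
        (1 / 8 * waveKernel 1 x t y + t ^ 2 / 64 * waveKernel 2 x t y) * g y)
      - (∫ y in (x - t)..(x + t),
        (-1 / 8 * waveKernel 1 x t y + (x - y) ^ 2 / 64 * waveKernel 2 x t y) * g y)
      = waveIntegral g x t / 4 := by
    rw [← intervalIntegral.integral_sub, waveIntegral, ← intervalIntegral.integral_div]
    · refine intervalIntegral.integral_congr fun y _ => ?_
      simp only [← waveKernel_ode x t y]
      ring
    all_goals
      refine (ContDiff.continuous (𝕜 := ℝ) (n := (⊤ : ℕ∞)) ?_).intervalIntegrable _ _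
      fun_prop
  rw [deriv_deriv_waveIntegral_time hg, deriv_deriv_waveIntegral_space hg, ← h]
  ring

end WaveKernel

/-- For `n = 1` and a smooth `g : ℝ → ℝ`, the function
`u(x,t) = (e^{-t/2}/2) ∫_{x-t}^{x+t} I_0((1/2)√(t² − (x−y)²)) g(y) dy` is smooth on
`ℝ × (0,∞)`, satisfies the damped wave equation `∂²u/∂t² − ∂²u/∂x² + ∂u/∂t = 0` there,
and `u(x,t) → 0`, `∂u/∂t(x,t) → g(x)` as `t → 0⁺`. -/
theorem damped_wave_solution_dim_one (g : ℝ → ℝ) (hg : ContDiff ℝ (⊤ : ℕ∞) g)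
    (u : ℝ → ℝ → ℝ)
    (hu : ∀ x t : ℝ, 0 < t →
      u x t = (exp (-t / 2) / 2) *
        ∫ y in (x - t)..(x + t), besselI 0 ((1 / 2) * Real.sqrt (t ^ 2 - (x - y) ^ 2)) * g y) :
    ContDiffOn ℝ (⊤ : ℕ∞) (fun p : ℝ × ℝ => u p.1 p.2) (univ ×ˢ Ioi 0) ∧
    (∀ x t : ℝ, 0 < t →
      deriv (deriv (fun s => u x s)) t - deriv (deriv (fun z => u z t)) x
        + deriv (fun s => u x s) t = 0) ∧
    (∀ x : ℝ,
      Tendsto (fun t => u x t) (𝓝[>] 0) (𝓝 0) ∧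
      Tendsto (fun t => deriv (fun s => u x s) t) (𝓝[>] 0) (𝓝 (g x))) := by
  have hu' (x t : ℝ) (ht : 0 < t) : u x t = exp (-t / 2) / 2 * waveIntegral g x t := by
    rw [hu x t ht, waveIntegral]
    congr 1
    refine intervalIntegral.integral_congr fun y hy => ?_
    rw [uIcc_of_le (by linarith), mem_Icc] at hy
    have hs : 0 ≤ t ^ 2 - (x - y) ^ 2 := by nlinarith [hy.1, hy.2]
    simp only [besselI_zero_half_sqrt hs, waveKernel]
  have hJ := contDiff_waveIntegral hg
  have hU : ContDiff ℝ (⊤ : ℕ∞)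
      fun p : ℝ × ℝ => exp (-p.2 / 2) / 2 * waveIntegral g p.1 p.2 := by fun_prop
  have hJt := contDiff_waveIntegral_time hg
  have hJt' := contDiff_deriv_waveIntegral_time hg
  have hJd (x t : ℝ) : HasDerivAt (waveIntegral g x) (deriv (waveIntegral g x) t) t :=
    ((hJt x).differentiable (by simp) t).hasDerivAt
  have hJdd (x t : ℝ) :
      HasDerivAt (deriv (waveIntegral g x)) (deriv (deriv (waveIntegral g x)) t) t :=
    ((hJt' x).differentiable (by simp) t).hasDerivAt
  have hE (t : ℝ) : HasDerivAt (fun s : ℝ => exp (-s / 2) / 2) (-(exp (-t / 2) / 2) / 2) t := by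
    refine (((hasDerivAt_id t).neg.div_const 2).exp.div_const 2).congr_deriv ?_
    simp only [Pi.neg_apply, id]
    ring
  have hut (x t : ℝ) (ht : 0 < t) : HasDerivAt (fun s => u x s)
      (exp (-t / 2) / 2 * (deriv (waveIntegral g x) t - waveIntegral g x t / 2)) t := by
    refine (((hE t).mul (hJd x t)).congr_of_eventuallyEq ?_).congr_deriv ?_
    · filter_upwards [Ioi_mem_nhds ht] with s hs using hu' x s hs
    · ring
  refine ⟨?_, fun x t ht => ?_, fun x => ⟨?_, ?_⟩⟩
  · exact hU.contDiffOn.congr fun p hp => hu' p.1 p.2 hp.2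
  · have hutt : HasDerivAt (deriv fun s => u x s)
        (exp (-t / 2) / 2 * (deriv (deriv (waveIntegral g x)) t - deriv (waveIntegral g x) t
          + waveIntegral g x t / 4)) t := by
      refine (((hE t).mul ((hJdd x t).sub
        ((hJd x t).div_const 2))).congr_of_eventuallyEq ?_).congr_deriv ?_
      · filter_upwards [Ioi_mem_nhds ht] with s hs using (hut x s hs).deriv
      · simp only [Pi.sub_apply]
        ring
    have huxx : deriv (deriv fun z => u z t) x
        = exp (-t / 2) / 2 * deriv (deriv fun z => waveIntegral g z t) x := by
      rw [funext fun z => hu' z t ht, deriv_const_mul_field', deriv_const_mul_field]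
    rw [hutt.deriv, huxx, (hut x t ht).deriv]
    linear_combination (exp (-t / 2) / 2) * waveIntegral_klein_gordon hg x t
  · have hc : Continuous fun t => exp (-t / 2) / 2 * waveIntegral g x t := by
      have := (hJt x).continuous
      fun_prop
    have h := (hc.tendsto 0).mono_left (nhdsWithin_le_nhds (s := Ioi 0))
    have h0 : waveIntegral g x 0 = 0 := by simp [waveIntegral]
    rw [h0, mul_zero] at h
    refine h.congr' ?_
    filter_upwards [self_mem_nhdsWithin] with t ht using (hu' x t ht).symm
  · have hc : Continuous fun t =>
        exp (-t / 2) / 2 * (deriv (waveIntegral g x) t - waveIntegral g x t / 2) := by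
      have := (hJt x).continuous
      have := (hJt' x).continuous
      fun_prop
    have h := (hc.tendsto 0).mono_left (nhdsWithin_le_nhds (s := Ioi 0))
    have h0 : exp (-0 / 2) / 2 * (deriv (waveIntegral g x) 0 - waveIntegral g x 0 / 2) = g x := by
      rw [(hasDerivAt_waveIntegral_time hg x 0).deriv]
      simp [waveIntegral]
      ring
    rw [h0] at h
    refine h.congr' ?_
    filter_upwards [self_mem_nhdsWithin] with t ht using (hut x t ht).deriv.symm
end
end

section
/- Let n be an odd integer with n > 1 and let g : ℝⁿ → ℝ be a smooth function. Define u(x,t) = c_n e^{-t/2} ((1/t) ∂/∂t)^{(n-1)/2} ∫_{B_t(x)} I_0((1/2)√(t² − r²)) g(y) dy for t > 0, where ((1/t) ∂/∂t)^k denotes the k-fold iterate of the operator F ↦ (1/t) ∂F/∂t applied in the t-variable. Then u is smooth on ℝⁿ × (0,∞), satisfies the damped wave equation ∂²u/∂t² − Δu + ∂u/∂t = 0 on ℝⁿ × (0,∞), and for every x ∈ ℝⁿ one has u(x,t) → 0 and ∂u/∂t(x,t) → g(x) as t → 0⁺. -/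
open Real Set Filter MeasureTheory Metric
open scoped Nat Topology

noncomputable section

/-- `k`-fold iterate of the operator `F ↦ (1/t) ∂F/∂t` in the `t`-variable. -/
def iterOp : ℕ → (ℝ → ℝ) → ℝ → ℝ
  | 0, F, t => F t
  | (k + 1), F, t => (1 / t) * deriv (iterOp k F) t

/-- `c_n = 2^{-(n+1)/2} π^{-(n-1)/2}` for odd `n > 1`. -/
def cnOdd (n : ℕ) : ℝ := (2 : ℝ) ^ (-((n : ℝ) + 1) / 2) * π ^ (-((n : ℝ) - 1) / 2)

/-- The Laplacian of `v : ℝⁿ → ℝ` at `x`, as the sum of second partial derivatives. -/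
def lap {n : ℕ} (v : EuclideanSpace ℝ (Fin n) → ℝ) (x : EuclideanSpace ℝ (Fin n)) : ℝ :=
  ∑ i : Fin n, iteratedDeriv 2 (fun a : ℝ => v (x + a • EuclideanSpace.single i (1 : ℝ))) 0

open scoped ContDiff

/-- The entire function `∑ⱼ q ^ j / (16 ^ j j! (j + m)!)`. -/
def besselEntire (m : ℕ) (q : ℝ) : ℝ :=
  ∑' j : ℕ, (1 / ((j ! : ℝ) * ((j + m)! : ℝ))) * (q / 16) ^ j

lemma norm_besselEntire_term_le (m j : ℕ) (q : ℝ) :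
    ‖(1 / ((j ! : ℝ) * ((j + m)! : ℝ))) * (q / 16) ^ j‖ ≤ |q / 16| ^ j / (j ! : ℝ) := by
  have h1 : (0 : ℝ) < (j ! : ℝ) := by exact_mod_cast Nat.factorial_pos j
  have h2 : (1 : ℝ) ≤ ((j + m)! : ℝ) := by exact_mod_cast Nat.factorial_pos (j + m)
  rw [norm_mul, norm_pow, Real.norm_eq_abs, Real.norm_eq_abs, div_eq_inv_mul (|q / 16| ^ j)]
  gcongr
  rw [abs_of_pos (by positivity), one_div]
  gcongr
  nlinarith

lemma summable_besselEntire (m : ℕ) (q : ℝ) :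
    Summable fun j : ℕ => (1 / ((j ! : ℝ) * ((j + m)! : ℝ))) * (q / 16) ^ j :=
  .of_norm_bounded (Real.summable_pow_div_factorial |q / 16|)
    fun j => norm_besselEntire_term_le m j q

lemma besselEntire_zero_right (m : ℕ) : besselEntire m 0 = 1 / (m ! : ℝ) := by
  rw [besselEntire, tsum_eq_single 0 (by intro j hj; simp [hj])]
  simp

lemma besselEntire_eq_add (m : ℕ) (q : ℝ) :
    besselEntire m q = besselEntire m 0
      + ∑' j : ℕ, (1 / (((j + 1)! : ℝ) * ((j + 1 + m)! : ℝ))) * (q / 16) ^ (j + 1) := by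
  rw [besselEntire_zero_right, besselEntire, (summable_besselEntire m q).tsum_eq_zero_add]
  simp

lemma hasDerivAt_besselEntire (m : ℕ) (q : ℝ) :
    HasDerivAt (besselEntire m) (besselEntire (m + 1) q / 16) q := by
  have key := hasDerivAt_tsum_of_isPreconnected
    (g := fun (j : ℕ) (y : ℝ) =>
      (1 / (((j + 1)! : ℝ) * ((j + 1 + m)! : ℝ))) * (y / 16) ^ (j + 1))
    (g' := fun (j : ℕ) (y : ℝ) =>
      (1 / ((j ! : ℝ) * ((j + (m + 1))! : ℝ))) * (y / 16) ^ j * (1 / 16))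
    (u := fun j => (|q| + 1) ^ j / (j ! : ℝ))
    (Real.summable_pow_div_factorial (|q| + 1)) (isOpen_ball (x := (0 : ℝ)) (ε := |q| + 1))
    (convex_ball _ _).isPreconnected ?_ ?_ (y₀ := q) (y := q) (by simp)
    ((summable_nat_add_iff 1).2 (summable_besselEntire m q)) (by simp)
  · have h : (besselEntire m) = fun q => besselEntire m 0
      + ∑' j : ℕ, (1 / (((j + 1)! : ℝ) * ((j + 1 + m)! : ℝ))) * (q / 16) ^ (j + 1) :=
      funext (besselEntire_eq_add m)
    rw [h]
    refine (key.const_add (besselEntire m 0)).congr_deriv ?_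
    rw [tsum_mul_right, besselEntire]
    ring
  · intro j y _
    have := (((hasDerivAt_id y).div_const 16).pow (j + 1)).const_mul
      (1 / (((j + 1)! : ℝ) * ((j + 1 + m)! : ℝ)))
    refine this.congr_deriv ?_
    have h1 : (j ! : ℝ) ≠ 0 := by exact_mod_cast Nat.factorial_ne_zero j
    have h2 : ((j + 1 + m)! : ℝ) ≠ 0 := by exact_mod_cast Nat.factorial_ne_zero _
    rw [show j + (m + 1) = j + 1 + m by ring, Nat.factorial_succ j]
    push_cast
    simp only [id]
    field_simp
  · intro j y hy
    rw [norm_mul]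
    have h1 := norm_besselEntire_term_le (m + 1) j y
    have h2 : |y / 16| ≤ |q| + 1 := by
      have : |y| < |q| + 1 := by simpa using hy
      rw [abs_div, abs_of_pos (show (0 : ℝ) < 16 by norm_num)]
      linarith [abs_nonneg y]
    have h3 : |y / 16| ^ j / (j ! : ℝ) ≤ (|q| + 1) ^ j / (j ! : ℝ) := by gcongr
    have h4 : ‖(1 / 16 : ℝ)‖ ≤ 1 := by norm_num
    calc _ ≤ ‖1 / ((j ! : ℝ) * ((j + (m + 1))! : ℝ)) * (y / 16) ^ j‖ * 1 := by gcongr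
      _ ≤ _ := by linarith

lemma contDiff_besselEntire (m : ℕ) : ContDiff ℝ ∞ (besselEntire m) := by
  rw [contDiff_infty]
  intro k
  induction k generalizing m with
  | zero =>
    exact contDiff_zero.2 (continuous_iff_continuousAt.2
      fun q => (hasDerivAt_besselEntire m q).continuousAt)
  | succ k ih =>
    have : deriv (besselEntire m) = fun q => besselEntire (m + 1) q / 16 :=
      funext fun q => (hasDerivAt_besselEntire m q).deriv
    push_cast
    rw [contDiff_succ_iff_deriv]
    refine ⟨fun q => (hasDerivAt_besselEntire m q).differentiableAt, by simp, ?_⟩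
    rw [this]
    exact (ih (m + 1)).div_const 16

lemma besselEntire_recurrence (m : ℕ) (q : ℝ) :
    besselEntire m q = (m + 1) * besselEntire (m + 1) q + q / 16 * besselEntire (m + 2) q := by
  rw [besselEntire, besselEntire, (summable_besselEntire m q).tsum_eq_zero_add,
    (summable_besselEntire (m + 1) q).tsum_eq_zero_add, besselEntire, mul_add, ← tsum_mul_left,
    ← tsum_mul_left, add_assoc, ← Summable.tsum_add]
  · congr 1
    · have h2 : (m ! : ℝ) ≠ 0 := by exact_mod_cast Nat.factorial_ne_zero _
      simp [Nat.factorial_succ]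
      field_simp
    · congr 1
      ext j
      have h1 : (j ! : ℝ) ≠ 0 := by exact_mod_cast Nat.factorial_ne_zero j
      have h2 : ((j + m + 1)! : ℝ) ≠ 0 := by exact_mod_cast Nat.factorial_ne_zero _
      rw [show j + 1 + m = j + m + 1 by ring, show j + 1 + (m + 1) = (j + m + 1) + 1 by ring,
        show j + (m + 2) = (j + m + 1) + 1 by ring, Nat.factorial_succ (j + m + 1),
        Nat.factorial_succ j]
      push_cast
      field_simp
      ring
  · exact ((summable_nat_add_iff 1).2 (summable_besselEntire (m + 1) q)).mul_left _
  · exact (summable_besselEntire (m + 2) q).mul_left _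

lemma besselI_zero_half_sqrt_s1 {q : ℝ} (hq : 0 ≤ q) :
    besselI 0 ((1 / 2) * Real.sqrt q) = besselEntire 0 q := by
  rw [besselI, besselEntire]
  congr 1
  ext j
  congr 1
  rw [add_zero, pow_mul]
  congr 1
  ring_nf
  rw [Real.sq_sqrt hq]

/-- The kernel `q ^ m ∑ⱼ q ^ j / (16 ^ j j! (j + m)!)`, cut off to zero for `q < 0`. -/
def kleinGordonKernel (m : ℕ) (q : ℝ) : ℝ := if 0 ≤ q then q ^ m * besselEntire m q else 0

lemma kleinGordonKernel_of_nonneg {m : ℕ} {q : ℝ} (hq : 0 ≤ q) :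
    kleinGordonKernel m q = q ^ m * besselEntire m q := if_pos hq

lemma kleinGordonKernel_of_neg {m : ℕ} {q : ℝ} (hq : q < 0) : kleinGordonKernel m q = 0 :=
  if_neg hq.not_ge

lemma kleinGordonKernel_succ_eq (m : ℕ) (q : ℝ) :
    kleinGordonKernel (m + 1) q = max q 0 ^ (m + 1) * besselEntire (m + 1) (max q 0) := by
  rcases lt_or_ge q 0 with h | h
  · simp [kleinGordonKernel_of_neg h, max_eq_right h.le]
  · rw [kleinGordonKernel_of_nonneg h, max_eq_left h]

lemma continuous_kleinGordonKernel (m : ℕ) : Continuous (kleinGordonKernel (m + 1)) := by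
  have h : kleinGordonKernel (m + 1)
      = fun q => max q 0 ^ (m + 1) * besselEntire (m + 1) (max q 0) :=
    funext (kleinGordonKernel_succ_eq m)
  rw [h]
  have := (contDiff_besselEntire (m + 1)).continuous
  fun_prop

lemma hasDerivAt_pow_mul_besselEntire (m : ℕ) (q : ℝ) :
    HasDerivAt (fun q => q ^ (m + 1) * besselEntire (m + 1) q) (q ^ m * besselEntire m q) q := by
  refine ((hasDerivAt_pow (m + 1) q).mul (hasDerivAt_besselEntire (m + 1) q)).congr_deriv ?_
  rw [besselEntire_recurrence m q]
  push_cast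
  ring

lemma hasDerivAt_kleinGordonKernel_of_ne (m : ℕ) {q : ℝ} (hq : q ≠ 0) :
    HasDerivAt (kleinGordonKernel (m + 1)) (kleinGordonKernel m q) q := by
  rcases lt_or_gt_of_ne hq with h | h
  · rw [kleinGordonKernel_of_neg h]
    refine (hasDerivAt_const q (0 : ℝ)).congr_of_eventuallyEq ?_
    filter_upwards [Iio_mem_nhds h] with p hp using kleinGordonKernel_of_neg hp
  · rw [kleinGordonKernel_of_nonneg h.le]
    refine (hasDerivAt_pow_mul_besselEntire m q).congr_of_eventuallyEq ?_
    filter_upwards [Ioi_mem_nhds h] with p hp using kleinGordonKernel_of_nonneg (le_of_lt hp)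

lemma hasDerivAt_kleinGordonKernel (m : ℕ) (q : ℝ) :
    HasDerivAt (kleinGordonKernel (m + 2)) (kleinGordonKernel (m + 1) q) q := by
  rcases eq_or_ne q 0 with rfl | hq
  · exact hasDerivAt_of_hasDerivAt_of_ne
      (fun p hp => hasDerivAt_kleinGordonKernel_of_ne (m + 1) hp)
      (continuous_kleinGordonKernel (m + 1)).continuousAt
      (continuous_kleinGordonKernel m).continuousAt
  · exact hasDerivAt_kleinGordonKernel_of_ne (m + 1) hq

lemma kleinGordonKernel_ode (m : ℕ) (q : ℝ) :
    q * kleinGordonKernel m q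
      = (m + 1) * kleinGordonKernel (m + 1) q + kleinGordonKernel (m + 2) q / 16 := by
  rcases lt_or_ge q 0 with h | h
  · simp [kleinGordonKernel_of_neg h]
  · simp only [kleinGordonKernel_of_nonneg h]
    rw [besselEntire_recurrence m q]
    ring

lemma exists_lipschitzOnWith_kleinGordonKernel (m : ℕ) (R : ℝ) :
    ∃ C : NNReal, LipschitzOnWith C (kleinGordonKernel (m + 1)) (Icc (-R) R) := by
  have hd : ContDiff ℝ 1 (fun q => q ^ (m + 1) * besselEntire (m + 1) q) :=
    (contDiff_id.pow (m + 1)).mul ((contDiff_besselEntire (m + 1)).of_le (by norm_cast))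
  obtain ⟨C, hC⟩ := hd.contDiffOn.exists_lipschitzOnWith one_ne_zero
    (convex_Icc (-|R|) |R|) isCompact_Icc
  refine ⟨C * 1, ?_⟩
  have hmax : LipschitzOnWith 1 (fun q : ℝ => max q 0) (Icc (-R) R) :=
    (LipschitzWith.id.max_const 0).lipschitzOnWith
  have hmaps : MapsTo (fun q : ℝ => max q 0) (Icc (-R) R) (Icc (-|R|) |R|) := by
    intro q hq
    rcases lt_or_ge q 0 with h | h
    · simp [max_eq_right h.le]
    · simp only [max_eq_left h]
      exact ⟨by linarith [abs_nonneg R], hq.2.trans (le_abs_self R)⟩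
  have h := hC.comp hmax hmaps
  have he : kleinGordonKernel (m + 1)
      = (fun q => q ^ (m + 1) * besselEntire (m + 1) q) ∘ fun q => max q 0 :=
    funext (kleinGordonKernel_succ_eq m)
  rwa [he]

section DirectionalDerivatives

variable {X : Type*} [NormedAddCommGroup X] [NormedSpace ℝ X]

/-- The directional derivative of `W` along `v`, as a function of the base point. -/
def dirDeriv (v : X) (W : X → ℝ) (p : X) : ℝ := fderiv ℝ W p v

lemma ContDiff.dirDeriv {W : X → ℝ} (hW : ContDiff ℝ ∞ W) (v : X) :
    ContDiff ℝ ∞ (dirDeriv v W) :=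
  (hW.fderiv_right (m := ∞) (by norm_cast)).clm_apply contDiff_const

lemma dirDeriv_comm {W : X → ℝ} (hW : ContDiff ℝ ∞ W) (v w : X) :
    dirDeriv v (dirDeriv w W) = dirDeriv w (dirDeriv v W) := by
  have hd : Differentiable ℝ (fderiv ℝ W) :=
    (hW.fderiv_right (m := ∞) (by norm_cast)).differentiable (by norm_num)
  have h : ∀ (a b : X) (p : X), _root_.dirDeriv a (_root_.dirDeriv b W) p
      = fderiv ℝ (fderiv ℝ W) p a b := by
    intro a b p
    have h1 : _root_.dirDeriv b W = fun p => fderiv ℝ W p b := rfl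
    rw [_root_.dirDeriv, h1, fderiv_clm_apply (hd p) (differentiableAt_const b)]
    simp
  ext p
  rw [h, h]
  exact (hW.contDiffAt.isSymmSndFDerivAt
    (by simpa using! (WithTop.coe_le_coe.2 le_top : ((2 : ℕ∞) : ℕ∞ω) ≤ ∞))).eq v w

lemma dirDeriv_congr_on {s : Set X} (hs : IsOpen s) {V W : X → ℝ} (h : EqOn V W s) (v : X) :
    EqOn (dirDeriv v V) (dirDeriv v W) s := by
  intro p hp
  have : V =ᶠ[𝓝 p] W := h.eventuallyEq_of_mem (hs.mem_nhds hp)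
  rw [dirDeriv, dirDeriv, this.fderiv_eq]

lemma dirDeriv_mul {V W : X → ℝ} (hV : ContDiff ℝ ∞ V) (hW : ContDiff ℝ ∞ W) (v p : X) :
    dirDeriv v (fun p => V p * W p) p = V p * dirDeriv v W p + dirDeriv v V p * W p := by
  have h1 := hV.differentiable (by norm_num) p
  have h2 := hW.differentiable (by norm_num) p
  simp only [dirDeriv]
  rw [fderiv_fun_mul h1 h2]
  simp
  ring

lemma dirDeriv_add {V W : X → ℝ} (hV : ContDiff ℝ ∞ V) (hW : ContDiff ℝ ∞ W) (v p : X) :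
    dirDeriv v (fun p => V p + W p) p = dirDeriv v V p + dirDeriv v W p := by
  have h1 := hV.differentiable (by norm_num) p
  have h2 := hW.differentiable (by norm_num) p
  simp only [dirDeriv]
  rw [fderiv_fun_add h1 h2]
  simp

lemma dirDeriv_const_mul (c : ℝ) {W : X → ℝ} (hW : ContDiff ℝ ∞ W) (v p : X) :
    dirDeriv v (fun p => c * W p) p = c * dirDeriv v W p := by
  simp only [dirDeriv]
  rw [fderiv_const_mul (hW.differentiable (by norm_num) p)]
  simp

lemma dirDeriv_sum {ι : Type*} (s : Finset ι) {W : ι → X → ℝ} (hW : ∀ i, ContDiff ℝ ∞ (W i))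
    (v p : X) :
    dirDeriv v (fun p => ∑ i ∈ s, W i p) p = ∑ i ∈ s, dirDeriv v (W i) p := by
  simp only [dirDeriv]
  rw [fderiv_fun_sum (fun i _ => (hW i).differentiable (by norm_num) p)]
  simp

lemma hasDerivAt_dirDeriv {W : X → ℝ} (hW : ContDiff ℝ ∞ W) {γ : ℝ → X} {v : X} {a : ℝ}
    (hγ : HasDerivAt γ v a) : HasDerivAt (fun a => W (γ a)) (dirDeriv v W (γ a)) a :=
  (hW.differentiable (by norm_num) (γ a)).hasFDerivAt.comp_hasDerivAt a hγ

end DirectionalDerivatives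

section SpaceTime

variable {n : ℕ}

/-- The spatial Laplacian of a function on space-time. -/
def spatialLaplacian (W : EuclideanSpace ℝ (Fin n) × ℝ → ℝ) (p : EuclideanSpace ℝ (Fin n) × ℝ) :
    ℝ :=
  ∑ i : Fin n, dirDeriv (EuclideanSpace.single i 1, 0) (dirDeriv (EuclideanSpace.single i 1, 0) W) p

/-- The time derivative of a function on space-time. -/
abbrev timeDeriv (W : EuclideanSpace ℝ (Fin n) × ℝ → ℝ) : EuclideanSpace ℝ (Fin n) × ℝ → ℝ :=
  dirDeriv (0, 1) W

variable {V W Z : EuclideanSpace ℝ (Fin n) × ℝ → ℝ}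

lemma hasDerivAt_timeDeriv (hW : ContDiff ℝ ∞ W) (x : EuclideanSpace ℝ (Fin n)) (t : ℝ) :
    HasDerivAt (fun s => W (x, s)) (timeDeriv W (x, t)) t :=
  hasDerivAt_dirDeriv hW ((hasDerivAt_const t x).prodMk (hasDerivAt_id t))

lemma hasDerivAt_spatial (hW : ContDiff ℝ ∞ W) (x v : EuclideanSpace ℝ (Fin n)) (t a : ℝ) :
    HasDerivAt (fun a : ℝ => W (x + a • v, t)) (dirDeriv (v, 0) W (x + a • v, t)) a := by
  refine hasDerivAt_dirDeriv hW (HasDerivAt.prodMk ?_ (hasDerivAt_const a t))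
  simpa using ((hasDerivAt_id a).smul_const v).const_add x

lemma lap_eq_spatialLaplacian (hW : ContDiff ℝ ∞ W) (x : EuclideanSpace ℝ (Fin n)) (t : ℝ) :
    lap (fun z => W (z, t)) x = spatialLaplacian W (x, t) := by
  refine Finset.sum_congr rfl fun i _ => ?_
  rw [iteratedDeriv_succ, iteratedDeriv_one]
  have h : deriv (fun a : ℝ => W (x + a • EuclideanSpace.single i (1 : ℝ), t))
      = fun a => dirDeriv (EuclideanSpace.single i 1, 0) W
        (x + a • EuclideanSpace.single i (1 : ℝ), t) :=
    funext fun a => (hasDerivAt_spatial hW x _ t a).deriv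
  rw [h, (hasDerivAt_spatial (hW.dirDeriv _) x _ t 0).deriv]
  simp

lemma ContDiff.spatialLaplacian (hW : ContDiff ℝ ∞ W) : ContDiff ℝ ∞ (spatialLaplacian W) :=
  ContDiff.sum fun _ _ => (hW.dirDeriv _).dirDeriv _

lemma timeDeriv_spatialLaplacian (hW : ContDiff ℝ ∞ W) (p : EuclideanSpace ℝ (Fin n) × ℝ) :
    timeDeriv (spatialLaplacian W) p = spatialLaplacian (timeDeriv W) p := by
  have h : spatialLaplacian W = fun p => ∑ i : Fin n, dirDeriv (EuclideanSpace.single i 1, 0)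
      (dirDeriv (EuclideanSpace.single i 1, 0) W) p := rfl
  rw [h, timeDeriv, dirDeriv_sum _ (fun i => (hW.dirDeriv _).dirDeriv _)]
  refine Finset.sum_congr rfl fun i _ => ?_
  rw [dirDeriv_comm (hW.dirDeriv _), dirDeriv_comm hW]

lemma spatialLaplacian_snd_mul (hW : ContDiff ℝ ∞ W) (p : EuclideanSpace ℝ (Fin n) × ℝ) :
    spatialLaplacian (fun p => p.2 * W p) p = p.2 * spatialLaplacian W p := by
  have h0 : ∀ (e : EuclideanSpace ℝ (Fin n)) (W : EuclideanSpace ℝ (Fin n) × ℝ → ℝ),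
      ContDiff ℝ ∞ W →
      dirDeriv (e, 0) (fun p => p.2 * W p) = fun p => p.2 * dirDeriv (e, 0) W p := by
    intro e W hW
    ext p
    rw [dirDeriv_mul contDiff_snd hW]
    simp [dirDeriv, fderiv_snd]
  rw [spatialLaplacian, spatialLaplacian, Finset.mul_sum]
  refine Finset.sum_congr rfl fun i _ => ?_
  rw [h0 _ W hW, h0 _ _ (hW.dirDeriv _)]

lemma timeDeriv_snd_mul (hW : ContDiff ℝ ∞ W) (p : EuclideanSpace ℝ (Fin n) × ℝ) :
    timeDeriv (fun p => p.2 * W p) p = p.2 * timeDeriv W p + W p := by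
  rw [timeDeriv, dirDeriv_mul contDiff_snd hW]
  simp [dirDeriv, fderiv_snd]

lemma isOpen_pos_time : IsOpen {p : EuclideanSpace ℝ (Fin n) × ℝ | 0 < p.2} :=
  isOpen_lt continuous_const continuous_snd

lemma spatialLaplacian_congr_on (h : EqOn V W {p | 0 < p.2}) :
    EqOn (spatialLaplacian V) (spatialLaplacian W) {p | 0 < p.2} := fun _ hp =>
  Finset.sum_congr rfl fun _ _ =>
    dirDeriv_congr_on isOpen_pos_time (dirDeriv_congr_on isOpen_pos_time h _) _ hp

/-- The Euler–Poisson–Darboux type equation `V_tt - (2 m / t) V_t = Δ V + V / 4` for `t > 0`,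
multiplied by `t`. -/
def SolvesEPD (m : ℝ) (V : EuclideanSpace ℝ (Fin n) × ℝ → ℝ) : Prop :=
  ∀ p : EuclideanSpace ℝ (Fin n) × ℝ, 0 < p.2 →
    p.2 * timeDeriv (timeDeriv V) p - 2 * m * timeDeriv V p
      = p.2 * (spatialLaplacian V p + V p / 4)

/-- Applying `(1/t) ∂/∂t` lowers the parameter of the equation by one. -/
lemma SolvesEPD.step {m : ℝ} (hV : ContDiff ℝ ∞ V) (hZ : ContDiff ℝ ∞ Z)
    (hVZ : EqOn (timeDeriv V) (fun p => p.2 * Z p) {p | 0 < p.2}) (h : SolvesEPD m V) :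
    SolvesEPD (m - 1) Z := by
  have h1 : EqOn (fun p => (1 - 2 * m) * Z p + p.2 * timeDeriv Z p)
      (fun p => spatialLaplacian V p + 1 / 4 * V p) {p | 0 < p.2} := by
    intro p hp
    have e1 : timeDeriv (timeDeriv V) p = timeDeriv (fun p => p.2 * Z p) p :=
      dirDeriv_congr_on isOpen_pos_time hVZ (0, 1) hp
    have e2 := h p hp
    rw [e1, hVZ hp, timeDeriv_snd_mul hZ] at e2
    have hp' : p.2 ≠ 0 := ne_of_gt hp
    apply mul_left_cancel₀ hp'
    simp only
    linear_combination e2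
  intro p hp
  have e1 := dirDeriv_congr_on isOpen_pos_time h1 (0, 1) hp
  have hZ' : ContDiff ℝ ∞ (timeDeriv Z) := hZ.dirDeriv _
  rw [dirDeriv_add (contDiff_const.mul hZ) (contDiff_snd.mul hZ'),
    dirDeriv_add hV.spatialLaplacian (contDiff_const.mul hV), dirDeriv_const_mul _ hZ,
    dirDeriv_const_mul _ hV] at e1
  have e2 := timeDeriv_snd_mul hZ' p
  have e3 := timeDeriv_spatialLaplacian hV p
  have e4 := spatialLaplacian_congr_on hVZ hp
  rw [spatialLaplacian_snd_mul hZ] at e4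
  have e5 := hVZ hp
  simp only at e5
  linear_combination e1 - e2 + e3 + e4 + 1 / 4 * e5

lemma SolvesEPD.const_mul {m : ℝ} (hV : ContDiff ℝ ∞ V) (h : SolvesEPD m V) (c : ℝ) :
    SolvesEPD m (fun p => c * V p) := by
  have h0 : ∀ (W : EuclideanSpace ℝ (Fin n) × ℝ → ℝ) (v : EuclideanSpace ℝ (Fin n) × ℝ),
      ContDiff ℝ ∞ W → dirDeriv v (fun p => c * W p) = fun p => c * dirDeriv v W p :=
    fun W v hW => funext fun p => dirDeriv_const_mul c hW v p
  intro p hp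
  have e := h p hp
  have hl : spatialLaplacian (fun p => c * V p) p = c * spatialLaplacian V p := by
    rw [spatialLaplacian, spatialLaplacian, Finset.mul_sum]
    refine Finset.sum_congr rfl fun i _ => ?_
    rw [h0 V _ hV, h0 _ _ (hV.dirDeriv _)]
  rw [hl, timeDeriv, timeDeriv, h0 V _ hV, h0 _ _ (hV.dirDeriv _)]
  linear_combination c * e

end SpaceTime

/-- Integrals over a ball of smooth functions depend smoothly on parameters. -/
lemma contDiff_setIntegral_closedBall {P E : Type*} [NormedAddCommGroup P] [NormedSpace ℝ P]
    [NormedAddCommGroup E] [InnerProductSpace ℝ E] [FiniteDimensional ℝ E] [MeasurableSpace E]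
    [BorelSpace E] {f : P × E → ℝ} (hf : ContDiff ℝ ∞ f) :
    ContDiff ℝ ∞ (fun p => ∫ z in closedBall (0 : E) 1, f (p, z)) := by
  let χ : ContDiffBump (0 : E) := ⟨1, 2, one_pos, one_lt_two⟩
  have key := contDiffOn_convolution_right_with_param_comp (n := ⊤) (μ := (volume : Measure E))
    (ContinuousLinearMap.mul ℝ ℝ) (s := (univ : Set P)) (v := fun _ => (0 : E)) contDiffOn_const
    (f := (closedBall (0 : E) 1).indicator fun _ => (1 : ℝ))
    (g := fun p z => χ z * f (p, -z)) (k := closedBall 0 2) isOpen_univ (isCompact_closedBall 0 2)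
    ?_ ?_ ?_
  · rw [contDiffOn_univ] at key
    convert key using 1
    ext p
    rw [convolution_def, ← integral_indicator isClosed_closedBall.measurableSet]
    congr 1
    ext z
    by_cases hz : z ∈ closedBall (0 : E) 1
    · have : χ (-z) = 1 := χ.one_of_mem_closedBall (by simpa using hz)
      simp [indicator_of_mem hz, this]
    · simp [indicator_of_notMem hz]
  · intro p z _ hz
    have : χ z = 0 := χ.zero_of_le_dist (le_of_lt (by simpa [χ] using hz))
    simp [this]
  · exact (integrable_indicator_iff isClosed_closedBall.measurableSet |>.2
      (integrableOn_const (measure_closedBall_lt_top.ne))).locallyIntegrable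
  · have h1 : ContDiff ℝ ∞ (fun q : P × E => χ q.2 * f (q.1, -q.2)) :=
      (χ.contDiff.comp contDiff_snd).mul
        (hf.comp (contDiff_fst.prodMk contDiff_snd.neg))
    exact h1.contDiffOn

section DerivativeUnderIntegral

variable {E : Type*} [NormedAddCommGroup E] [MeasurableSpace E] [BorelSpace E]
  {μ : Measure E} [IsFiniteMeasureOnCompacts μ]

lemma integrable_indicator_const_mul_abs {g : E → ℝ} (hg : Continuous g) {K : Set E}
    (hK : IsCompact K) (c : ℝ) : Integrable (K.indicator fun y => c * |g y|) μ :=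
  (integrable_indicator_iff hK.isClosed.measurableSet).2
    ((continuous_const.mul hg.abs).continuousOn.integrableOn_compact hK)

lemma hasDerivAt_integral_of_continuous [SecondCountableTopologyEither E ℝ]
    {κ κ' : ℝ → E → ℝ} {a₀ : ℝ} {K : Set E} (hK : IsCompact K)
    (hκ : Continuous ↿κ) (hκ' : Continuous ↿κ') (hd : ∀ a y, HasDerivAt (κ · y) (κ' a y) a)
    (h0 : ∀ a ∈ ball a₀ 1, ∀ y ∉ K, κ a y = 0) (h0' : ∀ a ∈ ball a₀ 1, ∀ y ∉ K, κ' a y = 0) :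
    HasDerivAt (fun a => ∫ y, κ a y ∂μ) (∫ y, κ' a₀ y ∂μ) a₀ := by
  have hc : ∀ a, Continuous (κ a) := fun a => hκ.comp (continuous_const.prodMk continuous_id)
  have hc' : ∀ a, Continuous (κ' a) := fun a => hκ'.comp (continuous_const.prodMk continuous_id)
  obtain ⟨M, hM⟩ := ((isCompact_closedBall a₀ 1).prod hK).exists_bound_of_continuousOn
    hκ'.continuousOn
  have hmem : a₀ ∈ ball a₀ (1 : ℝ) := mem_ball_self one_pos
  refine (hasDerivAt_integral_of_dominated_loc_of_deriv_le (s := ball a₀ 1)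
    (bound := K.indicator fun _ => M) (ball_mem_nhds a₀ one_pos)
    (.of_forall fun a => (hc a).aestronglyMeasurable)
    ((hc a₀).integrable_of_hasCompactSupport (.intro hK fun y hy => h0 a₀ hmem y hy))
    (hc' a₀).aestronglyMeasurable (.of_forall fun y a ha => ?_) ?_
    (.of_forall fun y a _ => hd a y)).2
  · by_cases hy : y ∈ K
    · rw [indicator_of_mem hy]
      exact hM (a, y) ⟨ball_subset_closedBall ha, hy⟩
    · rw [indicator_of_notMem hy, h0' a ha y hy, norm_zero]
  · exact (integrable_indicator_iff hK.isClosed.measurableSet).2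
      (integrableOn_const hK.measure_lt_top.ne)

end DerivativeUnderIntegral

section Potential

variable {n : ℕ} {g : EuclideanSpace ℝ (Fin n) → ℝ}

lemma kleinGordonKernel_eq_zero_of_lt {m : ℕ} {t r : ℝ} (ht : |t| < r) :
    kleinGordonKernel m (t ^ 2 - r ^ 2) = 0 := by
  refine kleinGordonKernel_of_neg ?_
  have := sq_lt_sq' (by linarith [abs_nonneg t]) ht
  rw [sq_abs] at this
  linarith

lemma integrable_mul_kleinGordonKernel (hg : Continuous g) (m : ℕ)
    {A : EuclideanSpace ℝ (Fin n) → ℝ} (hA : Continuous A) (x : EuclideanSpace ℝ (Fin n)) (t : ℝ) :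
    Integrable fun y => A y * kleinGordonKernel (m + 1) (t ^ 2 - ‖x - y‖ ^ 2) * g y := by
  have hK := continuous_kleinGordonKernel m
  refine Continuous.integrable_of_hasCompactSupport (by fun_prop)
    (.intro (isCompact_closedBall x |t|) fun y hy => ?_)
  rw [kleinGordonKernel_eq_zero_of_lt]
  · ring
  · simpa [dist_eq_norm, norm_sub_rev] using hy

/-- The integral of `g` against the kernel of index `m` on the ball of radius `t` around `x`. -/
def kernelIntegral (m : ℕ) (g : EuclideanSpace ℝ (Fin n) → ℝ) (x : EuclideanSpace ℝ (Fin n))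
    (t : ℝ) : ℝ :=
  ∫ y, kleinGordonKernel m (t ^ 2 - ‖x - y‖ ^ 2) * g y

lemma measurable_kleinGordonKernel (m : ℕ) : Measurable (kleinGordonKernel m) := by
  have := (contDiff_besselEntire m).continuous
  exact Measurable.ite (measurableSet_le measurable_const measurable_id)
    (by fun_prop) measurable_const

lemma hasDerivAt_kernelIntegral (hg : Continuous g) (m : ℕ) (x : EuclideanSpace ℝ (Fin n)) {t : ℝ}
    (ht : 0 < t) :
    HasDerivAt (kernelIntegral (m + 1) g x) (2 * t * kernelIntegral m g x t) t := by
  obtain ⟨C, hC⟩ := exists_lipschitzOnWith_kleinGordonKernel m ((t + 1) ^ 2)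
  have hK := continuous_kleinGordonKernel m
  have hKm := measurable_kleinGordonKernel m
  have hn : Ioo 0 (t + 1) ∈ 𝓝 t := Ioo_mem_nhds ht (by linarith)
  have key := (hasDerivAt_integral_of_dominated_loc_of_lip (μ := volume)
    (F := fun s y => kleinGordonKernel (m + 1) (s ^ 2 - ‖x - y‖ ^ 2) * g y)
    (F' := fun y => 2 * t * (kleinGordonKernel m (t ^ 2 - ‖x - y‖ ^ 2) * g y))
    (x₀ := t) (s := Ioo 0 (t + 1))
    (bound := (closedBall x (t + 1)).indicator fun y => (2 * C * (t + 1)) * |g y|)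
    hn (.of_forall fun s => Continuous.aestronglyMeasurable (by fun_prop))
    (by simpa using integrable_mul_kleinGordonKernel hg m continuous_const (A := fun _ => 1) x t)
    (Measurable.aestronglyMeasurable (by have := hg.measurable; fun_prop))
    (.of_forall fun y => ?_)
    (integrable_indicator_const_mul_abs hg (isCompact_closedBall _ _) _) ?_).2
  · simp_rw [integral_const_mul] at key
    exact key
  · rw [lipschitzOnWith_iff_dist_le_mul]
    intro s hs s' hs'
    have hb : (0 : ℝ) ≤ (closedBall x (t + 1)).indicator
        (fun y => (2 * C * (t + 1)) * |g y|) y :=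
      indicator_nonneg (fun _ _ => by positivity) _
    rw [Real.coe_nnabs, abs_of_nonneg hb]
    by_cases hy : y ∈ closedBall x (t + 1)
    · have hr : ‖x - y‖ ≤ t + 1 := by
        rw [← dist_eq_norm, dist_comm]; exact hy
      have hr2 : ‖x - y‖ ^ 2 ≤ (t + 1) ^ 2 := by gcongr
      have hq : ∀ s ∈ Ioo 0 (t + 1),
          s ^ 2 - ‖x - y‖ ^ 2 ∈ Icc (-(t + 1) ^ 2) ((t + 1) ^ 2) := by
        intro s hs
        have : s ^ 2 ≤ (t + 1) ^ 2 := pow_le_pow_left₀ hs.1.le hs.2.le 2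
        constructor <;> nlinarith [sq_nonneg s, sq_nonneg ‖x - y‖]
      have h1 := hC.dist_le_mul _ (hq s hs) _ (hq s' hs')
      rw [indicator_of_mem hy]
      rw [Real.dist_eq, Real.dist_eq] at h1 ⊢
      rw [← sub_mul, abs_mul]
      have h2 : |s ^ 2 - ‖x - y‖ ^ 2 - (s' ^ 2 - ‖x - y‖ ^ 2)| ≤ 2 * (t + 1) * |s - s'| := by
        rw [show s ^ 2 - ‖x - y‖ ^ 2 - (s' ^ 2 - ‖x - y‖ ^ 2) = (s + s') * (s - s') by ring,
          abs_mul, abs_of_pos (add_pos hs.1 hs'.1)]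
        gcongr
        linarith [hs.2, hs'.2]
      calc _ ≤ (C * (2 * (t + 1) * |s - s'|)) * |g y| := by
            gcongr
            exact h1.trans (by gcongr)
        _ = _ := by ring
    · have hr : t + 1 < ‖x - y‖ := by
        simpa [dist_eq_norm, norm_sub_rev] using hy
      have hz : ∀ s ∈ Ioo 0 (t + 1),
          kleinGordonKernel (m + 1) (s ^ 2 - ‖x - y‖ ^ 2) = 0 := by
        intro s hs
        exact kleinGordonKernel_eq_zero_of_lt (by rw [abs_of_pos hs.1]; linarith [hs.2])
      simp [hz s hs, hz s' hs', indicator_of_notMem hy]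
  · have hs : ∀ᵐ y ∂(volume : Measure (EuclideanSpace ℝ (Fin n))), y ∉ sphere x t :=
      measure_eq_zero_iff_ae_notMem.1 (Measure.addHaar_sphere_of_ne_zero volume x ht.ne')
    filter_upwards [hs] with y hy
    have hq : t ^ 2 - ‖x - y‖ ^ 2 ≠ 0 := by
      intro h
      apply hy
      rw [mem_sphere, dist_comm, dist_eq_norm]
      exact (pow_left_inj₀ (norm_nonneg _) ht.le two_ne_zero).1 (by linarith)
    have h1 : HasDerivAt (fun s : ℝ => s ^ 2 - ‖x - y‖ ^ 2) (2 * t) t := by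
      simpa using (hasDerivAt_pow 2 t).sub_const (‖x - y‖ ^ 2)
    refine (((hasDerivAt_kleinGordonKernel_of_ne m hq).comp t h1).mul_const (g y)).congr_deriv ?_
    ring

lemma norm_add_smul_single_sub_sq (x y : EuclideanSpace ℝ (Fin n)) (i : Fin n) (a : ℝ) :
    ‖x + a • EuclideanSpace.single i (1 : ℝ) - y‖ ^ 2
      = ‖x - y‖ ^ 2 + 2 * a * (x - y) i + a ^ 2 := by
  rw [show x + a • EuclideanSpace.single i (1 : ℝ) - y
    = (x - y) + a • EuclideanSpace.single i (1 : ℝ) by abel, norm_add_sq_real, norm_smul,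
    inner_smul_right, EuclideanSpace.inner_single_right]
  simp
  ring

lemma hasDerivAt_kernel_spatial (m : ℕ) (x y : EuclideanSpace ℝ (Fin n)) (i : Fin n) (t a : ℝ) :
    HasDerivAt (fun a : ℝ => kleinGordonKernel (m + 2)
        (t ^ 2 - ‖x + a • EuclideanSpace.single i (1 : ℝ) - y‖ ^ 2))
      (-2 * ((x - y) i + a) * kleinGordonKernel (m + 1)
        (t ^ 2 - ‖x + a • EuclideanSpace.single i (1 : ℝ) - y‖ ^ 2)) a := by
  have h1 : HasDerivAt
      (fun a : ℝ => t ^ 2 - ‖x + a • EuclideanSpace.single i (1 : ℝ) - y‖ ^ 2)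
      (-2 * ((x - y) i + a)) a := by
    simp_rw [norm_add_smul_single_sub_sq]
    have h2 : HasDerivAt (fun a : ℝ => 2 * a * (x - y) i) (2 * (x - y) i) a := by
      simpa using ((hasDerivAt_id a).const_mul 2).mul_const ((x - y) i)
    refine (((h2.const_add (‖x - y‖ ^ 2)).add (hasDerivAt_pow 2 a)).const_sub
      (t ^ 2)).congr_deriv ?_
    simp
    ring
  exact ((hasDerivAt_kleinGordonKernel m _).comp a h1).congr_deriv (by ring)

lemma lt_norm_of_notMem_closedBall {x y e : EuclideanSpace ℝ (Fin n)} (he : ‖e‖ = 1) {t a a₀ : ℝ}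
    (ha : a ∈ ball a₀ 1) (hy : y ∉ closedBall x (|t| + |a₀| + 1)) : |t| < ‖x + a • e - y‖ := by
  have h1 : |t| + |a₀| + 1 < ‖x - y‖ := by simpa [dist_eq_norm, norm_sub_rev] using hy
  have h2 : |a - a₀| < 1 := by simpa [Real.dist_eq] using ha
  have h3 : |a| ≤ |a - a₀| + |a₀| := by simpa using abs_add_le (a - a₀) a₀
  have h4 : ‖x - y‖ ≤ ‖x + a • e - y‖ + ‖a • e‖ := by
    simpa [show x + a • e - y - a • e = x - y by abel] using norm_sub_le (x + a • e - y) (a • e)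
  rw [norm_smul, he, mul_one, Real.norm_eq_abs] at h4
  linarith

lemma iteratedDeriv_two_kernelIntegral (hg : Continuous g) (x : EuclideanSpace ℝ (Fin n))
    (i : Fin n) (t : ℝ) :
    iteratedDeriv 2 (fun a : ℝ =>
        kernelIntegral 3 g (x + a • EuclideanSpace.single i (1 : ℝ)) t) 0
      = ∫ y, (-2 * kleinGordonKernel 2 (t ^ 2 - ‖x - y‖ ^ 2)
          + 4 * (x - y) i ^ 2 * kleinGordonKernel 1 (t ^ 2 - ‖x - y‖ ^ 2)) * g y := by
  have hK1 := continuous_kleinGordonKernel 0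
  have hK2 := continuous_kleinGordonKernel 1
  have hK3 := continuous_kleinGordonKernel 2
  simp only [zero_add, one_add_one_eq_two] at hK1 hK2
  norm_num at hK3
  have he : ‖EuclideanSpace.single i (1 : ℝ)‖ = 1 := by simp
  have hz : ∀ (m : ℕ) (a₀ : ℝ), ∀ a ∈ ball a₀ 1, ∀ y ∉ closedBall x (|t| + |a₀| + 1),
      kleinGordonKernel m (t ^ 2 - ‖x + a • EuclideanSpace.single i (1 : ℝ) - y‖ ^ 2) = 0 :=
    fun m a₀ a ha y hy => kleinGordonKernel_eq_zero_of_lt (lt_norm_of_notMem_closedBall he ha hy)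
  have h1 : ∀ a₀ : ℝ, HasDerivAt
      (fun a : ℝ => kernelIntegral 3 g (x + a • EuclideanSpace.single i (1 : ℝ)) t)
      (∫ y, -2 * ((x - y) i + a₀) * kleinGordonKernel 2
        (t ^ 2 - ‖x + a₀ • EuclideanSpace.single i (1 : ℝ) - y‖ ^ 2) * g y) a₀ := by
    intro a₀
    refine hasDerivAt_integral_of_continuous
      (κ := fun a y => kleinGordonKernel 3
        (t ^ 2 - ‖x + a • EuclideanSpace.single i (1 : ℝ) - y‖ ^ 2) * g y)
      (κ' := fun a y => -2 * ((x - y) i + a) * kleinGordonKernel 2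
        (t ^ 2 - ‖x + a • EuclideanSpace.single i (1 : ℝ) - y‖ ^ 2) * g y)
      (isCompact_closedBall x (|t| + |a₀| + 1)) ?_ ?_ ?_ ?_ ?_
    · simp only [Function.HasUncurry.uncurry, id]
      fun_prop
    · simp only [Function.HasUncurry.uncurry, id]
      fun_prop
    · exact fun a y => (hasDerivAt_kernel_spatial 1 x y i t a).mul_const (g y)
    · exact fun a ha y hy => by simp only [hz 3 a₀ a ha y hy, zero_mul]
    · exact fun a ha y hy => by simp only [hz 2 a₀ a ha y hy, zero_mul, mul_zero]
  have h2 : HasDerivAt (fun a₀ : ℝ => ∫ y, -2 * ((x - y) i + a₀) * kleinGordonKernel 2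
        (t ^ 2 - ‖x + a₀ • EuclideanSpace.single i (1 : ℝ) - y‖ ^ 2) * g y)
      (∫ y, (-2 * kleinGordonKernel 2
          (t ^ 2 - ‖x + (0 : ℝ) • EuclideanSpace.single i (1 : ℝ) - y‖ ^ 2)
        + 4 * ((x - y) i + 0) ^ 2 * kleinGordonKernel 1
          (t ^ 2 - ‖x + (0 : ℝ) • EuclideanSpace.single i (1 : ℝ) - y‖ ^ 2)) * g y) 0 := by
    refine hasDerivAt_integral_of_continuous
      (κ := fun a y => -2 * ((x - y) i + a) * kleinGordonKernel 2
        (t ^ 2 - ‖x + a • EuclideanSpace.single i (1 : ℝ) - y‖ ^ 2) * g y)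
      (κ' := fun a y => (-2 * kleinGordonKernel 2
          (t ^ 2 - ‖x + a • EuclideanSpace.single i (1 : ℝ) - y‖ ^ 2)
        + 4 * ((x - y) i + a) ^ 2 * kleinGordonKernel 1
          (t ^ 2 - ‖x + a • EuclideanSpace.single i (1 : ℝ) - y‖ ^ 2)) * g y)
      (isCompact_closedBall x (|t| + |0| + 1)) ?_ ?_ ?_ ?_ ?_
    · simp only [Function.HasUncurry.uncurry, id]
      fun_prop
    · simp only [Function.HasUncurry.uncurry, id]
      fun_prop
    · intro a y
      have h3 : HasDerivAt (fun a : ℝ => -2 * ((x - y) i + a)) (-2) a := by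
        simpa using ((hasDerivAt_id a).const_add ((x - y) i)).const_mul (-2)
      refine ((h3.mul (hasDerivAt_kernel_spatial 0 x y i t a)).mul_const (g y)).congr_deriv ?_
      ring
    · exact fun a ha y hy => by simp only [hz 2 0 a ha y hy, zero_mul, mul_zero]
    · exact fun a ha y hy => by
        simp only [hz 2 0 a ha y hy, hz 1 0 a ha y hy, zero_mul, mul_zero, add_zero]
  rw [iteratedDeriv_succ, iteratedDeriv_one, funext fun a => (h1 a).deriv, h2.deriv]
  simp

lemma lap_kernelIntegral (hg : Continuous g) (x : EuclideanSpace ℝ (Fin n)) (t : ℝ) :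
    lap (fun z => kernelIntegral 3 g z t) x
      = 4 * t ^ 2 * kernelIntegral 1 g x t - (2 * n + 8) * kernelIntegral 2 g x t
        - kernelIntegral 3 g x t / 4 := by
  have hi := fun m c => integrable_mul_kleinGordonKernel hg m
    (continuous_const (y := (c : ℝ))) x t
  rw [lap]
  simp_rw [iteratedDeriv_two_kernelIntegral hg]
  rw [← integral_finsetSum]
  · have h : ∀ y, ∑ i : Fin n, (-2 * kleinGordonKernel 2 (t ^ 2 - ‖x - y‖ ^ 2)
          + 4 * (x - y) i ^ 2 * kleinGordonKernel 1 (t ^ 2 - ‖x - y‖ ^ 2)) * g y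
        = 4 * t ^ 2 * kleinGordonKernel 1 (t ^ 2 - ‖x - y‖ ^ 2) * g y
          - (2 * n + 8) * kleinGordonKernel 2 (t ^ 2 - ‖x - y‖ ^ 2) * g y
          - 1 / 4 * kleinGordonKernel 3 (t ^ 2 - ‖x - y‖ ^ 2) * g y := by
      intro y
      have h1 := kleinGordonKernel_ode 1 (t ^ 2 - ‖x - y‖ ^ 2)
      have h2 : ‖x - y‖ ^ 2 = ∑ i, (x - y) i ^ 2 := EuclideanSpace.real_norm_sq_eq _
      have h3 : ∑ i, 4 * (x - y) i ^ 2 * kleinGordonKernel 1 (t ^ 2 - ‖x - y‖ ^ 2)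
          = 4 * ‖x - y‖ ^ 2 * kleinGordonKernel 1 (t ^ 2 - ‖x - y‖ ^ 2) := by
        rw [h2, Finset.mul_sum, Finset.sum_mul]
      rw [← Finset.sum_mul, Finset.sum_add_distrib, h3]
      simp only [Finset.sum_const, Finset.card_univ, Fintype.card_fin, nsmul_eq_mul]
      norm_num at h1
      linear_combination (-4 * g y) * h1
    simp_rw [h]
    have i1 : Integrable fun y =>
      4 * t ^ 2 * kleinGordonKernel 1 (t ^ 2 - ‖x - y‖ ^ 2) * g y := hi 0 _
    have i2 : Integrable fun y =>
      (2 * (n : ℝ) + 8) * kleinGordonKernel 2 (t ^ 2 - ‖x - y‖ ^ 2) * g y := hi 1 _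
    have i3 : Integrable fun y =>
      1 / 4 * kleinGordonKernel 3 (t ^ 2 - ‖x - y‖ ^ 2) * g y := hi 2 _
    rw [integral_sub (i1.sub' i2) i3, integral_sub i1 i2]
    simp_rw [mul_assoc _ (kleinGordonKernel _ _) (g _), integral_const_mul]
    simp only [kernelIntegral]
    ring
  · intro i _
    have h1 := integrable_mul_kleinGordonKernel hg 0
      (A := fun y => 4 * (x - y) i ^ 2) (by fun_prop) x t
    simp only [add_mul]
    exact (hi 1 (-2)).add h1

/-- The kernel integral over the unit ball after rescaling, without the Jacobian. -/
def scaledIntegral (m : ℕ) (g : EuclideanSpace ℝ (Fin n) → ℝ)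
    (p : EuclideanSpace ℝ (Fin n) × ℝ) : ℝ :=
  ∫ z in closedBall (0 : EuclideanSpace ℝ (Fin n)) 1,
    (p.2 ^ 2 * (1 - ‖z‖ ^ 2)) ^ m * besselEntire m (p.2 ^ 2 * (1 - ‖z‖ ^ 2)) * g (p.1 + p.2 • z)

lemma contDiff_scaledIntegral (m : ℕ) (hg : ContDiff ℝ ∞ g) :
    ContDiff ℝ ∞ (scaledIntegral m g) := by
  refine contDiff_setIntegral_closedBall
    (f := fun q : (EuclideanSpace ℝ (Fin n) × ℝ) × EuclideanSpace ℝ (Fin n) =>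
      (q.1.2 ^ 2 * (1 - ‖q.2‖ ^ 2)) ^ m * besselEntire m (q.1.2 ^ 2 * (1 - ‖q.2‖ ^ 2))
        * g (q.1.1 + q.1.2 • q.2)) ?_
  have h1 : ContDiff ℝ ∞ (fun q : (EuclideanSpace ℝ (Fin n) × ℝ) × EuclideanSpace ℝ (Fin n) =>
      q.1.2 ^ 2 * (1 - ‖q.2‖ ^ 2)) :=
    (contDiff_fst.snd.pow 2).mul (contDiff_const.sub (contDiff_snd.norm_sq ℝ))
  exact ((h1.pow m).mul ((contDiff_besselEntire m).comp h1)).mul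
    (hg.comp (contDiff_fst.fst.add (contDiff_fst.snd.smul contDiff_snd)))

lemma kernelIntegral_eq_scaledIntegral (m : ℕ) (g : EuclideanSpace ℝ (Fin n) → ℝ)
    (x : EuclideanSpace ℝ (Fin n)) {t : ℝ} (ht : 0 < t) :
    kernelIntegral m g x t = t ^ n * scaledIntegral m g (x, t) := by
  rw [kernelIntegral, ← integral_add_left_eq_self _ x]
  have h := Measure.integral_comp_smul (volume : Measure (EuclideanSpace ℝ (Fin n)))
    (fun y => kleinGordonKernel m (t ^ 2 - ‖x - (x + y)‖ ^ 2) * g (x + y)) t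
  rw [finrank_euclideanSpace_fin, abs_of_pos (by positivity), smul_eq_mul,
    eq_inv_mul_iff_mul_eq₀ (by positivity)] at h
  rw [← h, scaledIntegral, ← integral_indicator isClosed_closedBall.measurableSet]
  congr 2
  ext z
  have hq : t ^ 2 - ‖x - (x + t • z)‖ ^ 2 = t ^ 2 * (1 - ‖z‖ ^ 2) := by
    rw [sub_add_cancel_left, norm_neg, norm_smul, Real.norm_eq_abs, abs_of_pos ht]
    ring
  rw [hq]
  by_cases hz : z ∈ closedBall (0 : EuclideanSpace ℝ (Fin n)) 1
  · have h1 : ‖z‖ ^ 2 ≤ 1 := pow_le_one₀ (norm_nonneg z) (by simpa using hz)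
    rw [indicator_of_mem hz, kleinGordonKernel_of_nonneg (mul_nonneg (by positivity) (by linarith))]
  · have h1 : 1 < ‖z‖ ^ 2 := one_lt_pow₀ (by simpa using hz) two_ne_zero
    rw [indicator_of_notMem hz, kleinGordonKernel_of_neg (by nlinarith [pow_pos ht 2]), zero_mul]

lemma kernelIntegral_zero_eq (g : EuclideanSpace ℝ (Fin n) → ℝ) (x : EuclideanSpace ℝ (Fin n))
    {s : ℝ} (hs : 0 ≤ s) :
    kernelIntegral 0 g x s = ∫ y in closedBall x s,
      besselI 0 ((1 / 2) * Real.sqrt (s ^ 2 - ‖x - y‖ ^ 2)) * g y := by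
  rw [kernelIntegral, ← integral_indicator isClosed_closedBall.measurableSet]
  congr 1
  ext y
  by_cases hy : y ∈ closedBall x s
  · have h1 : ‖x - y‖ ≤ s := by rw [← dist_eq_norm, dist_comm]; exact hy
    have h2 : ‖x - y‖ ^ 2 ≤ s ^ 2 := by gcongr
    have h3 : 0 ≤ s ^ 2 - ‖x - y‖ ^ 2 := by linarith
    rw [indicator_of_mem hy, besselI_zero_half_sqrt_s1 h3, kleinGordonKernel_of_nonneg h3, pow_zero,
      one_mul]
  · have h1 : s < ‖x - y‖ := by simpa [dist_eq_norm, norm_sub_rev] using hy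
    rw [indicator_of_notMem hy,
      kleinGordonKernel_eq_zero_of_lt (by rwa [abs_of_nonneg hs]), zero_mul]

end Potential

section Solution

variable {n k : ℕ} {g : EuclideanSpace ℝ (Fin n) → ℝ}

/-- A smooth function on space-time which agrees with `kernelIntegral m g` for positive times. -/
def potential (m : ℕ) (g : EuclideanSpace ℝ (Fin n) → ℝ) (p : EuclideanSpace ℝ (Fin n) × ℝ) : ℝ :=
  p.2 ^ n * scaledIntegral m g p

lemma contDiff_potential (m : ℕ) (hg : ContDiff ℝ ∞ g) : ContDiff ℝ ∞ (potential m g) :=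
  (contDiff_snd.pow n).mul (contDiff_scaledIntegral m hg)

lemma potential_eq_kernelIntegral (m : ℕ) (g : EuclideanSpace ℝ (Fin n) → ℝ)
    (x : EuclideanSpace ℝ (Fin n)) {t : ℝ} (ht : 0 < t) :
    potential m g (x, t) = kernelIntegral m g x t :=
  (kernelIntegral_eq_scaledIntegral m g x ht).symm

lemma timeDeriv_potential (m : ℕ) (hg : ContDiff ℝ ∞ g) :
    EqOn (timeDeriv (potential (m + 1) g)) (fun p => p.2 * (2 * potential m g p))
      {p | 0 < p.2} := by
  rintro ⟨x, t⟩ (ht : 0 < t)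
  have h1 := hasDerivAt_timeDeriv (contDiff_potential (m + 1) hg) x t
  have h2 : HasDerivAt (fun s => potential (m + 1) g (x, s)) (2 * t * kernelIntegral m g x t) t := by
    refine (hasDerivAt_kernelIntegral hg.continuous m x ht).congr_of_eventuallyEq ?_
    filter_upwards [Ioi_mem_nhds ht] with s hs using potential_eq_kernelIntegral _ g x hs
  rw [h1.unique h2]
  simp only [potential_eq_kernelIntegral m g x ht]
  ring

lemma solvesEPD_potential_three (hg : ContDiff ℝ ∞ g) :
    SolvesEPD (((n : ℝ) - 1) / 2 + 3) (potential 3 g) := by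
  rintro ⟨x, t⟩ (ht : 0 < t)
  have h3 := contDiff_potential 3 hg
  have h2 := contDiff_potential 2 hg
  have e1 : timeDeriv (timeDeriv (potential 3 g)) (x, t)
      = timeDeriv (fun p => p.2 * (2 * potential 2 g p)) (x, t) :=
    dirDeriv_congr_on isOpen_pos_time (timeDeriv_potential 2 hg) _ ht
  have e5 : timeDeriv (fun p => 2 * potential 2 g p) (x, t)
      = 2 * timeDeriv (potential 2 g) (x, t) := dirDeriv_const_mul 2 h2 _ _
  rw [timeDeriv_snd_mul (contDiff_const.mul h2), e5] at e1
  have e2 : timeDeriv (potential 2 g) (x, t) = t * (2 * potential 1 g (x, t)) :=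
    timeDeriv_potential 1 hg ht
  have e3 : timeDeriv (potential 3 g) (x, t) = t * (2 * potential 2 g (x, t)) :=
    timeDeriv_potential 2 hg ht
  have e4 := lap_kernelIntegral hg.continuous x t
  simp_rw [← fun z => potential_eq_kernelIntegral 3 g z ht] at e4
  rw [lap_eq_spatialLaplacian h3, ← potential_eq_kernelIntegral 1 g x ht,
    ← potential_eq_kernelIntegral 2 g x ht] at e4
  rw [e1, e2, e3, e4]
  simp only
  ring

lemma SolvesEPD.of_potential_succ (hg : ContDiff ℝ ∞ g) {m : ℝ} {j : ℕ}
    (h : SolvesEPD m (potential (j + 1) g)) : SolvesEPD (m - 1) (potential j g) := by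
  have h1 : ContDiff ℝ ∞ (fun p => 2 * potential j g p) :=
    contDiff_const.mul (contDiff_potential j hg)
  have h2 := (h.step (contDiff_potential (j + 1) hg) h1 (timeDeriv_potential j hg)).const_mul
    h1 (1 / 2)
  convert h2 using 1
  ext p
  ring

lemma solvesEPD_potential_zero (hg : ContDiff ℝ ∞ g) :
    SolvesEPD (((n : ℝ) - 1) / 2) (potential 0 g) := by
  have h := (((solvesEPD_potential_three hg).of_potential_succ hg).of_potential_succ
    hg).of_potential_succ hg
  convert h using 1
  ring

/-- The smooth factors in `((1/t) ∂/∂t) ^ j (t ^ (2 k + 1) P) = t ^ (2 (k - j) + 1) P_j`. -/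
def reducedFactor (k : ℕ) (P : EuclideanSpace ℝ (Fin n) × ℝ → ℝ) :
    ℕ → EuclideanSpace ℝ (Fin n) × ℝ → ℝ
  | 0 => P
  | j + 1 => fun p => (2 * (k - j) + 1) * reducedFactor k P j p
      + p.2 * timeDeriv (reducedFactor k P j) p

variable {P : EuclideanSpace ℝ (Fin n) × ℝ → ℝ}

lemma contDiff_reducedFactor (hP : ContDiff ℝ ∞ P) (j : ℕ) :
    ContDiff ℝ ∞ (reducedFactor k P j) := by
  induction j with
  | zero => exact hP
  | succ j ih => exact (contDiff_const.mul ih).add (contDiff_snd.mul (ih.dirDeriv _))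

lemma hasDerivAt_pow_mul_reducedFactor (hP : ContDiff ℝ ∞ P) {j d : ℕ} (hd : j + (d + 1) = k)
    (x : EuclideanSpace ℝ (Fin n)) (t : ℝ) :
    HasDerivAt (fun s => s ^ (2 * (d + 1) + 1) * reducedFactor k P j (x, s))
      (t * (t ^ (2 * d + 1) * reducedFactor k P (j + 1) (x, t))) t := by
  refine ((hasDerivAt_pow (2 * (d + 1) + 1) t).mul
    (hasDerivAt_timeDeriv (contDiff_reducedFactor hP j) x t)).congr_deriv ?_
  rw [reducedFactor, ← hd]
  push_cast
  ring

lemma iterOp_eq_reducedFactor (hP : ContDiff ℝ ∞ P) (x : EuclideanSpace ℝ (Fin n)) {F : ℝ → ℝ}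
    (hF : ∀ t, 0 < t → F t = t ^ (2 * k + 1) * P (x, t)) {j d : ℕ} (hd : j + d = k) {t : ℝ}
    (ht : 0 < t) : iterOp j F t = t ^ (2 * d + 1) * reducedFactor k P j (x, t) := by
  induction j generalizing d t with
  | zero =>
    obtain rfl : d = k := by omega
    exact hF t ht
  | succ j ih =>
    have hd' : j + (d + 1) = k := by omega
    have h : HasDerivAt (iterOp j F)
        (t * (t ^ (2 * d + 1) * reducedFactor k P (j + 1) (x, t))) t := by
      refine (hasDerivAt_pow_mul_reducedFactor hP hd' x t).congr_of_eventuallyEq ?_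
      filter_upwards [Ioi_mem_nhds ht] with s hs using ih hd' hs
    rw [iterOp, h.deriv]
    field_simp

lemma reducedFactor_zero_time (x : EuclideanSpace ℝ (Fin n)) {j d : ℕ} (hd : j + d = k) :
    reducedFactor k P j (x, 0) * ((2 * d + 1)‼ : ℕ) = ((2 * k + 1)‼ : ℕ) * P (x, 0) := by
  induction j generalizing d with
  | zero =>
    obtain rfl : d = k := by omega
    rw [reducedFactor, mul_comm]
  | succ j ih =>
    have hd' : j + (d + 1) = k := by omega
    rw [← ih hd', show 2 * (d + 1) + 1 = (2 * d + 1) + 2 by ring, Nat.doubleFactorial_add_two,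
      reducedFactor, ← hd']
    push_cast
    ring

lemma SolvesEPD.reducedFactor (hP : ContDiff ℝ ∞ P)
    (h : SolvesEPD k (fun p => p.2 ^ (2 * k + 1) * P p)) {j d : ℕ} (hd : j + d = k) :
    SolvesEPD d (fun p => p.2 ^ (2 * d + 1) * reducedFactor k P j p) := by
  induction j generalizing d with
  | zero =>
    obtain rfl : d = k := by omega
    exact h
  | succ j ih =>
    have hd' : j + (d + 1) = k := by omega
    have hc : ∀ i e : ℕ, ContDiff ℝ ∞ (fun p : EuclideanSpace ℝ (Fin n) × ℝ =>
        p.2 ^ (2 * e + 1) * _root_.reducedFactor k P i p) := fun i e =>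
      (contDiff_snd.pow _).mul (contDiff_reducedFactor hP i)
    have := (ih hd').step (hc j (d + 1)) (hc (j + 1) d) fun p _ =>
      (hasDerivAt_timeDeriv (hc j (d + 1)) p.1 p.2).unique
        (hasDerivAt_pow_mul_reducedFactor hP hd' p.1 p.2)
    simpa using this

lemma scaledIntegral_zero_time (hn : n = 2 * k + 1) (x : EuclideanSpace ℝ (Fin n)) :
    ((2 * k + 1)‼ : ℕ) * scaledIntegral 0 g (x, 0) = π ^ k * 2 ^ (k + 1) * g x := by
  have hv : volume.real (closedBall (0 : EuclideanSpace ℝ (Fin n)) 1)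
      = π ^ k * 2 ^ (k + 1) / ((2 * k + 1)‼ : ℕ) := by
    rw [measureReal_def, InnerProductSpace.volume_closedBall_of_dim_odd (k := k) (by simp [hn])]
    simp only [finrank_euclideanSpace_fin, hn, ENNReal.ofReal_one, one_pow, one_mul]
    exact ENNReal.toReal_ofReal (by positivity)
  have h0 : (((2 * k + 1)‼ : ℕ) : ℝ) ≠ 0 := by
    exact_mod_cast (Nat.doubleFactorial_pos _).ne'
  simp only [scaledIntegral, ne_eq, OfNat.ofNat_ne_zero, not_false_eq_true, zero_pow, zero_mul,
    pow_zero, besselEntire_zero_right, zero_smul, add_zero, setIntegral_const, smul_eq_mul, hv]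
  simp
  field_simp

lemma cnOdd_mul (hn : n = 2 * k + 1) : cnOdd n * (π ^ k * 2 ^ (k + 1)) = 1 := by
  have h1 : (-((n : ℝ) + 1) / 2) = -((k + 1 : ℕ) : ℝ) := by rw [hn]; push_cast; ring
  have h2 : (-((n : ℝ) - 1) / 2) = -(k : ℝ) := by rw [hn]; push_cast; ring
  rw [cnOdd, h1, h2, Real.rpow_neg zero_le_two, Real.rpow_neg Real.pi_pos.le, Real.rpow_natCast,
    Real.rpow_natCast]
  field_simp

lemma hasDerivAt_const_mul_exp_mul (c : ℝ) {f : ℝ → ℝ} {f' t : ℝ} (hf : HasDerivAt f f' t) :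
    HasDerivAt (fun s => c * exp (-s / 2) * f s) (c * exp (-t / 2) * (f' - f t / 2)) t := by
  have h1 : HasDerivAt (fun s : ℝ => exp (-s / 2)) (exp (-t / 2) * (-1 / 2)) t :=
    ((hasDerivAt_neg t).div_const 2).exp
  exact ((h1.const_mul c).mul hf).congr_deriv (by ring)

end Solution

/-- For odd `n > 1` and smooth `g`, the function
`u(x,t) = c_n e^{-t/2} ((1/t)∂/∂t)^{(n-1)/2} ∫_{B_t(x)} I_0((1/2)√(t²−r²)) g(y) dy`
is smooth on `ℝⁿ × (0,∞)`, solves the damped wave equation there, and satisfies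
`u(x,t) → 0` and `∂u/∂t(x,t) → g(x)` as `t → 0⁺`. -/
theorem damped_wave_solution_odd_dim (n : ℕ) (hn : Odd n) (hn1 : 1 < n)
    (g : EuclideanSpace ℝ (Fin n) → ℝ) (hg : ContDiff ℝ (⊤ : ℕ∞) g)
    (u : EuclideanSpace ℝ (Fin n) → ℝ → ℝ)
    (hu : ∀ (x : EuclideanSpace ℝ (Fin n)) (t : ℝ), 0 < t →
      u x t = cnOdd n * exp (-t / 2) *
        iterOp ((n - 1) / 2)
          (fun s => ∫ y in closedBall x s,
            besselI 0 ((1 / 2) * Real.sqrt (s ^ 2 - ‖x - y‖ ^ 2)) * g y) t) :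
    ContDiffOn ℝ (⊤ : ℕ∞) (fun p : EuclideanSpace ℝ (Fin n) × ℝ => u p.1 p.2) (univ ×ˢ Ioi 0) ∧
    (∀ (x : EuclideanSpace ℝ (Fin n)) (t : ℝ), 0 < t →
      deriv (deriv (fun s => u x s)) t - lap (fun z => u z t) x
        + deriv (fun s => u x s) t = 0) ∧
    (∀ x : EuclideanSpace ℝ (Fin n),
      Tendsto (fun t => u x t) (𝓝[>] 0) (𝓝 0) ∧
      Tendsto (fun t => deriv (fun s => u x s) t) (𝓝[>] 0) (𝓝 (g x))) := by
  obtain ⟨k, hk⟩ := hn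
  have hk2 : (n - 1) / 2 = k := by omega
  have hkr : ((n : ℝ) - 1) / 2 = k := by rw [hk]; push_cast; ring
  set R := reducedFactor k (scaledIntegral 0 g) k
  have hP : ContDiff ℝ ∞ (scaledIntegral 0 g) := contDiff_scaledIntegral 0 hg
  have hR : ContDiff ℝ ∞ R := contDiff_reducedFactor hP k
  let V : EuclideanSpace ℝ (Fin n) × ℝ → ℝ := fun p => p.2 * R p
  have hV : ContDiff ℝ ∞ V := contDiff_snd.mul hR
  have hEPD : SolvesEPD 0 V := by
    have h := solvesEPD_potential_zero hg
    have he : potential 0 g = fun p => p.2 ^ (2 * k + 1) * scaledIntegral 0 g p := by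
      ext p
      rw [potential, ← hk]
    rw [hkr, he] at h
    simpa using h.reducedFactor hP (add_zero k)
  have huV : ∀ x t, 0 < t → u x t = cnOdd n * exp (-t / 2) * V (x, t) := by
    intro x t ht
    rw [hu x t ht, hk2, iterOp_eq_reducedFactor hP x (fun s hs => ?_) (add_zero k) ht]
    · simp [V, R]
    · rw [← kernelIntegral_zero_eq g x hs.le, kernelIntegral_eq_scaledIntegral 0 g x hs, ← hk]
  have hu1 : ∀ x t, 0 < t → HasDerivAt (fun s => u x s)
      (cnOdd n * exp (-t / 2) * (timeDeriv V (x, t) - V (x, t) / 2)) t := by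
    intro x t ht
    refine (hasDerivAt_const_mul_exp_mul (cnOdd n)
      (hasDerivAt_timeDeriv hV x t)).congr_of_eventuallyEq ?_
    filter_upwards [Ioi_mem_nhds ht] with s hs using huV x s hs
  have hlim : ∀ f : ℝ → ℝ, Continuous f → Tendsto f (𝓝[>] 0) (𝓝 (f 0)) :=
    fun f hf => (hf.tendsto 0).mono_left nhdsWithin_le_nhds
  refine ⟨?_, fun x t ht => ?_, fun x => ⟨?_, ?_⟩⟩
  · have h1 : ContDiff ℝ ∞ fun p : EuclideanSpace ℝ (Fin n) × ℝ =>
        cnOdd n * exp (-p.2 / 2) * V p :=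
      (contDiff_const.mul (contDiff_snd.neg.div_const 2).exp).mul hV
    exact h1.contDiffOn.congr fun p hp => huV p.1 p.2 hp.2
  · have hu2 : HasDerivAt (deriv fun s => u x s) (cnOdd n * exp (-t / 2) *
        ((timeDeriv (timeDeriv V) (x, t) - timeDeriv V (x, t) / 2)
          - (timeDeriv V (x, t) - V (x, t) / 2) / 2)) t := by
      refine (hasDerivAt_const_mul_exp_mul (cnOdd n)
        ((hasDerivAt_timeDeriv (hV.dirDeriv (0, 1)) x t).sub
          ((hasDerivAt_timeDeriv hV x t).div_const 2))).congr_of_eventuallyEq ?_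
      filter_upwards [Ioi_mem_nhds ht] with s hs using (hu1 x s hs).deriv
    have hl : lap (fun z => u z t) x
        = cnOdd n * exp (-t / 2) * spatialLaplacian V (x, t) := by
      rw [funext fun z => huV z t ht, ← lap_eq_spatialLaplacian hV, lap, lap, Finset.mul_sum]
      refine Finset.sum_congr rfl fun i _ => ?_
      exact iteratedDeriv_const_mul_field _ _
    have e : timeDeriv (timeDeriv V) (x, t) = spatialLaplacian V (x, t) + V (x, t) / 4 := by
      have h := hEPD (x, t) ht
      simp only [mul_zero, zero_mul, sub_zero] at h
      exact mul_left_cancel₀ ht.ne' h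
    rw [hu2.deriv, hl, (hu1 x t ht).deriv, e]
    ring
  · have hc : Continuous fun t : ℝ => cnOdd n * exp (-t / 2) * V (x, t) := by
      have := hV.continuous
      fun_prop
    have h := hlim _ hc
    simp only [V, zero_mul, mul_zero] at h
    refine h.congr' ?_
    filter_upwards [self_mem_nhdsWithin] with t ht using (huV x t ht).symm
  · have hc : Continuous fun t : ℝ =>
        cnOdd n * exp (-t / 2) * (timeDeriv V (x, t) - V (x, t) / 2) := by
      have h1 := hV.continuous
      have h2 := (hV.dirDeriv (0, 1)).continuous
      fun_prop
    have hv : cnOdd n * exp (-0 / 2) * (timeDeriv V (x, 0) - V (x, 0) / 2) = g x := by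
      have h1 : timeDeriv V (x, 0) = R (x, 0) := by
        rw [timeDeriv_snd_mul hR]
        simp
      have h2 := reducedFactor_zero_time (P := scaledIntegral 0 g) x (add_zero k)
      rw [scaledIntegral_zero_time hk] at h2
      have h3 : R (x, 0) = π ^ k * 2 ^ (k + 1) * g x := by simpa using h2
      rw [h1, h3]
      simp only [V, neg_zero, zero_div, exp_zero, zero_mul, sub_zero, mul_one]
      rw [← mul_assoc, cnOdd_mul hk, one_mul]
    have h := hlim _ hc
    rw [hv] at h
    refine h.congr' ?_
    filter_upwards [self_mem_nhdsWithin] with t ht using (hu1 x t ht).deriv.symm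
end
end

section
/- Let n be an even integer and let g : ℝⁿ → ℝ be a smooth function. Define u(x,t) = 2 c_n e^{-t/2} ((1/t) ∂/∂t)^{(n-2)/2} ∫_{B_t(x)} [cosh((1/2)√(t² − r²)) / √(t² − r²)] g(y) dy for t > 0, where ((1/t) ∂/∂t)^k denotes the k-fold iterate of the operator F ↦ (1/t) ∂F/∂t applied in the t-variable. Then u is smooth on ℝⁿ × (0,∞), satisfies the damped wave equation ∂²u/∂t² − Δu + ∂u/∂t = 0 on ℝⁿ × (0,∞), and for every x ∈ ℝⁿ one has u(x,t) → 0 and ∂u/∂t(x,t) → g(x) as t → 0⁺. -/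
open Real Set Filter MeasureTheory Metric
open scoped Nat Topology

noncomputable section

/-- `c_n = 2^{-(n+2)/2} π^{-n/2}` for even `n`. -/
def cnEven (n : ℕ) : ℝ := (2 : ℝ) ^ (-((n : ℝ) + 2) / 2) * π ^ (-(n : ℝ) / 2)

/-! ### Smooth parametric integrals -/

section ParametricIntegral

variable {Ω P Z : Type} [MeasurableSpace Ω] {μ : Measure Ω}
  [NormedAddCommGroup P] [NormedSpace ℝ P] [FiniteDimensional ℝ P]
  [NormedAddCommGroup Z] [MeasurableSpace Z] [BorelSpace Z]
  [SecondCountableTopology Z]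

/-- The integrand `a • h ψ` is integrable when `a` is integrable, `ψ` has relatively compact
range and `h` is continuous. -/
lemma integrable_smul_comp_of_isCompact {E : Type} [NormedAddCommGroup E] [NormedSpace ℝ E]
    {a : Ω → ℝ} (ha : Integrable a μ) {ψ : Ω → Z} (hψ : Measurable ψ)
    {K : Set Z} (hK : IsCompact K) (hψK : ∀ ω, ψ ω ∈ K) {h : Z → E} (hh : Continuous h) :
    Integrable (fun ω => a ω • h (ψ ω)) μ := by
  obtain ⟨C, hC⟩ := hK.exists_bound_of_continuousOn hh.continuousOn
  exact ha.smul_bdd C (hh.comp_stronglyMeasurable hψ.stronglyMeasurable).aestronglyMeasurable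
    (ae_of_all _ fun ω => hC _ (hψK ω))

variable [NormedSpace ℝ Z]

lemma hasFDerivAt_integral_smul_comp {E : Type} [NormedAddCommGroup E] [NormedSpace ℝ E]
    {a : Ω → ℝ} (ha : Integrable a μ) {ψ : Ω → Z} (hψ : Measurable ψ)
    {K : Set Z} (hK : IsCompact K) (hψK : ∀ ω, ψ ω ∈ K) {h : P × Z → E} (hh : ContDiff ℝ 1 h)
    (p : P) :
    HasFDerivAt (fun q => ∫ ω, a ω • h (q, ψ ω) ∂μ)
      (∫ ω, a ω • fderiv ℝ (fun q => h (q, ψ ω)) p ∂μ) p := by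
  have hd : Continuous fun z : P × Z => fderiv ℝ (fun q => h (q, z.2)) z.1 :=
    (ContDiff.fderiv (f := fun (z : P × Z) (q : P) => h (q, z.2)) (n := 0) (m := 1)
      (by fun_prop) contDiff_fst (by norm_num)).continuous
  obtain ⟨C, hC⟩ := ((isCompact_closedBall p 1).prod hK).exists_bound_of_continuousOn
    hd.continuousOn
  have hi (q : P) : Integrable (fun ω => a ω • h (q, ψ ω)) μ :=
    integrable_smul_comp_of_isCompact ha hψ hK hψK (h := fun z => h (q, z))
      (hh.continuous.comp (by fun_prop))
  refine hasFDerivAt_integral_of_dominated_of_fderiv_le (𝕜 := ℝ)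
    (F' := fun q ω => a ω • fderiv ℝ (fun q => h (q, ψ ω)) q)
    (bound := fun ω => ‖a ω‖ * C) (closedBall_mem_nhds p one_pos)
    (Eventually.of_forall fun q => (hi q).aestronglyMeasurable) (hi p) ?_ ?_ ?_ ?_
  · exact (integrable_smul_comp_of_isCompact ha hψ hK hψK
      (h := fun z => fderiv ℝ (fun q => h (q, z)) p)
      (hd.comp (by fun_prop : Continuous fun z : Z => (p, z)))).aestronglyMeasurable
  · refine ae_of_all _ fun ω q hq => ?_
    rw [norm_smul]
    gcongr
    exact hC (q, ψ ω) ⟨hq, hψK ω⟩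
  · exact ha.norm.mul_const C
  · refine ae_of_all _ fun ω q _ => ?_
    have : DifferentiableAt ℝ (fun q => h (q, ψ ω)) q :=
      (hh.differentiable (by norm_num)).comp (by fun_prop) q
    exact this.hasFDerivAt.const_smul (a ω)

lemma contDiff_nat_integral_smul_comp {a : Ω → ℝ} (ha : Integrable a μ) {ψ : Ω → Z}
    (hψ : Measurable ψ) {K : Set Z} (hK : IsCompact K) (hψK : ∀ ω, ψ ω ∈ K) (n : ℕ) :
    ∀ {E : Type} [NormedAddCommGroup E] [NormedSpace ℝ E] {h : P × Z → E}
      (_ : ContDiff ℝ (n + 1 : ℕ) h), ContDiff ℝ n (fun q => ∫ ω, a ω • h (q, ψ ω) ∂μ) := by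
  induction n with
  | zero =>
    intro E _ _ h hh
    rw [Nat.cast_zero, contDiff_zero]
    exact continuous_iff_continuousAt.2 fun p =>
      (hasFDerivAt_integral_smul_comp ha hψ hK hψK (by simpa using hh) p).continuousAt
  | succ n ih =>
    intro E _ _ h hh
    have h1 : ContDiff ℝ 1 h := hh.of_le (by exact_mod_cast Nat.le_add_left 1 (n + 1))
    push_cast
    rw [contDiff_succ_iff_hasFDerivAt]
    refine ⟨_, ?_, fun p => hasFDerivAt_integral_smul_comp ha hψ hK hψK h1 p⟩
    refine ih (h := fun z : P × Z => fderiv ℝ (fun q => h (q, z.2)) z.1) ?_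
    exact ContDiff.fderiv (f := fun (z : P × Z) (q : P) => h (q, z.2))
      (hh.comp (by fun_prop)) contDiff_fst (by exact_mod_cast le_rfl)

lemma contDiff_integral_smul_comp {a : Ω → ℝ} (ha : Integrable a μ) {ψ : Ω → Z}
    (hψ : Measurable ψ) {K : Set Z} (hK : IsCompact K) (hψK : ∀ ω, ψ ω ∈ K)
    {E : Type} [NormedAddCommGroup E] [NormedSpace ℝ E] {h : P × Z → E}
    (hh : ContDiff ℝ (⊤ : ℕ∞) h) :
    ContDiff ℝ (⊤ : ℕ∞) (fun q => ∫ ω, a ω • h (q, ψ ω) ∂μ) :=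
  contDiff_infty.2 fun n => contDiff_nat_integral_smul_comp ha hψ hK hψK n
    (contDiff_infty.1 hh (n + 1))

end ParametricIntegral

/-! ### The kernels -/

/-- The kernel `cosh (√τ / 2) / √τ`, extended by zero to `τ ≤ 0`. -/
def kernel₀ (τ : ℝ) : ℝ := cosh (1 / 2 * √τ) / √τ

/-- The primitive of `kernel₀` vanishing at `0`. -/
def kernel₁ (τ : ℝ) : ℝ := 4 * sinh (1 / 2 * √τ)

/-- The primitive of `kernel₁` vanishing at `0`. -/
def kernel₂ (τ : ℝ) : ℝ := 16 * (√τ * cosh (1 / 2 * √τ)) - 32 * sinh (1 / 2 * √τ)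

/-- The primitive of `kernel₂` vanishing at `0`. -/
def kernel₃ (τ : ℝ) : ℝ := 16 * (τ * kernel₁ τ) - 24 * kernel₂ τ

lemma continuous_kernel₁ : Continuous kernel₁ := by unfold kernel₁; fun_prop

lemma continuous_kernel₂ : Continuous kernel₂ := by unfold kernel₂; fun_prop

lemma continuous_kernel₃ : Continuous kernel₃ := by
  have := continuous_kernel₁
  have := continuous_kernel₂
  unfold kernel₃; fun_prop

lemma measurable_kernel₀ : Measurable kernel₀ := by unfold kernel₀; fun_prop

lemma kernel₀_of_nonpos {τ : ℝ} (h : τ ≤ 0) : kernel₀ τ = 0 := by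
  simp [kernel₀, sqrt_eq_zero_of_nonpos h]

lemma kernel₁_of_nonpos {τ : ℝ} (h : τ ≤ 0) : kernel₁ τ = 0 := by
  simp [kernel₁, sqrt_eq_zero_of_nonpos h]

lemma kernel₂_of_nonpos {τ : ℝ} (h : τ ≤ 0) : kernel₂ τ = 0 := by
  simp [kernel₂, sqrt_eq_zero_of_nonpos h]

lemma kernel₃_of_nonpos {τ : ℝ} (h : τ ≤ 0) : kernel₃ τ = 0 := by
  simp [kernel₃, kernel₁_of_nonpos h, kernel₂_of_nonpos h]

lemma hasDerivAt_of_vanish_nonpos {f : ℝ → ℝ} (hf : ∀ τ ≤ 0, f τ = 0) {τ : ℝ} (h : τ < 0) :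
    HasDerivAt f 0 τ :=
  (hasDerivAt_const τ (0 : ℝ)).congr_of_eventuallyEq <| by
    filter_upwards [Iio_mem_nhds h] with y hy using hf y (le_of_lt hy)

lemma hasDerivAt_kernel₁ {τ : ℝ} (h : τ ≠ 0) : HasDerivAt kernel₁ (kernel₀ τ) τ := by
  rcases h.lt_or_gt with h | h
  · rw [kernel₀_of_nonpos h.le]
    exact hasDerivAt_of_vanish_nonpos (fun _ => kernel₁_of_nonpos) h
  · have := ((hasDerivAt_sqrt h.ne').const_mul (1 / 2)).sinh.const_mul 4
    refine this.congr_deriv ?_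
    have := (sqrt_pos.2 h).ne'
    simp only [kernel₀]; field_simp; norm_num

lemma hasDerivAt_kernel₂ (τ : ℝ) : HasDerivAt kernel₂ (kernel₁ τ) τ := by
  refine hasDerivAt_of_hasDerivAt_of_ne' (x := 0) (fun τ h => ?_)
    continuous_kernel₂.continuousAt continuous_kernel₁.continuousAt τ
  rcases h.lt_or_gt with h | h
  · rw [kernel₁_of_nonpos h.le]
    exact hasDerivAt_of_vanish_nonpos (fun _ => kernel₂_of_nonpos) h
  · have h1 := hasDerivAt_sqrt h.ne'
    have h2 := h1.const_mul (1 / 2)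
    have := ((h1.mul h2.cosh).const_mul 16).sub (h2.sinh.const_mul 32)
    refine this.congr_deriv ?_
    have := (sqrt_pos.2 h).ne'
    simp only [kernel₁]; field_simp; ring

lemma hasDerivAt_kernel₃ (τ : ℝ) : HasDerivAt kernel₃ (kernel₂ τ) τ := by
  refine hasDerivAt_of_hasDerivAt_of_ne' (x := 0) (fun τ h => ?_)
    continuous_kernel₃.continuousAt continuous_kernel₂.continuousAt τ
  have := (((hasDerivAt_id τ).mul (hasDerivAt_kernel₁ h)).const_mul 16).sub
    ((hasDerivAt_kernel₂ τ).const_mul 24)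
  refine this.congr_deriv ?_
  rcases h.lt_or_gt with h | h
  · simp [kernel₀_of_nonpos h.le, kernel₁_of_nonpos h.le, kernel₂_of_nonpos h.le]
  · have h1 := (sqrt_pos.2 h).ne'
    have h2 : τ = √τ * √τ := (mul_self_sqrt h.le).symm
    have h3 : τ * kernel₀ τ = √τ * cosh (1 / 2 * √τ) := by
      simp only [kernel₀]; field_simp; rw [sq, ← h2]
    have h4 : 16 * (1 * kernel₁ τ + id τ * kernel₀ τ) - 24 * kernel₁ τ
      = 16 * (τ * kernel₀ τ) - 8 * kernel₁ τ := by simp only [id]; ring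
    rw [h4, h3]; simp only [kernel₁, kernel₂]; ring

lemma kernel₀_nonneg (τ : ℝ) : 0 ≤ kernel₀ τ :=
  div_nonneg (cosh_pos _).le (sqrt_nonneg _)

lemma kernel₁_nonneg (τ : ℝ) : 0 ≤ kernel₁ τ := by
  have : 0 ≤ sinh (1 / 2 * √τ) := sinh_nonneg_iff.2 (by positivity)
  unfold kernel₁; positivity

lemma kernel₂_nonneg (τ : ℝ) : 0 ≤ kernel₂ τ := by
  have hm : Monotone kernel₂ := monotone_of_hasDerivAt_nonneg hasDerivAt_kernel₂ kernel₁_nonneg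
  rcases le_total τ 0 with h | h
  · exact (kernel₂_of_nonpos h).ge
  · exact (kernel₂_of_nonpos le_rfl).ge.trans (hm h)

/-- `K` is a continuous primitive of the nonnegative `K'`, both vanishing on the nonpositive
half-line. -/
structure IsKernelPrimitive (K K' : ℝ → ℝ) : Prop where
  continuous : Continuous K
  measurable : Measurable K'
  nonneg : ∀ τ, 0 ≤ K' τ
  of_nonpos : ∀ τ ≤ 0, K τ = 0
  of_nonpos' : ∀ τ ≤ 0, K' τ = 0
  hasDerivAt : ∀ τ ≠ 0, HasDerivAt K (K' τ) τ

lemma isKernelPrimitive₁ : IsKernelPrimitive kernel₁ kernel₀ where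
  continuous := continuous_kernel₁
  measurable := measurable_kernel₀
  nonneg := kernel₀_nonneg
  of_nonpos _ := kernel₁_of_nonpos
  of_nonpos' _ := kernel₀_of_nonpos
  hasDerivAt _ := hasDerivAt_kernel₁

lemma isKernelPrimitive₂ : IsKernelPrimitive kernel₂ kernel₁ where
  continuous := continuous_kernel₂
  measurable := continuous_kernel₁.measurable
  nonneg := kernel₁_nonneg
  of_nonpos _ := kernel₂_of_nonpos
  of_nonpos' _ := kernel₁_of_nonpos
  hasDerivAt τ _ := hasDerivAt_kernel₂ τ

lemma isKernelPrimitive₃ : IsKernelPrimitive kernel₃ kernel₂ where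
  continuous := continuous_kernel₃
  measurable := continuous_kernel₂.measurable
  nonneg := kernel₂_nonneg
  of_nonpos _ := kernel₃_of_nonpos
  of_nonpos' _ := kernel₂_of_nonpos
  hasDerivAt τ _ := hasDerivAt_kernel₃ τ

lemma IsKernelPrimitive.hasDerivAt_sq_sub {K K' : ℝ → ℝ} (h : IsKernelPrimitive K K')
    {r σ : ℝ} (hσ : σ ^ 2 - r ^ 2 ≠ 0) :
    HasDerivAt (fun σ => K (σ ^ 2 - r ^ 2) / 2) (σ * K' (σ ^ 2 - r ^ 2)) σ := by
  have h1 : HasDerivAt (fun σ : ℝ => σ ^ 2 - r ^ 2) (2 * σ) σ := by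
    simpa using (hasDerivAt_pow 2 σ).sub_const (r ^ 2)
  refine (((h.hasDerivAt _ hσ).comp σ h1).div_const 2).congr_deriv ?_
  ring

lemma IsKernelPrimitive.intervalIntegrable {K K' : ℝ → ℝ} (h : IsKernelPrimitive K K')
    {r s : ℝ} (hr : 0 ≤ r) (hs : 0 ≤ s) :
    IntervalIntegrable (fun σ => σ * K' (σ ^ 2 - r ^ 2)) volume 0 s := by
  have hzero (c : ℝ) (hc0 : 0 ≤ c) (hc : c ≤ r) :
      IntervalIntegrable (fun σ => σ * K' (σ ^ 2 - r ^ 2)) volume 0 c := by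
    refine (intervalIntegrable_const (c := (0 : ℝ))).congr fun σ hσ => ?_
    rw [uIoc_of_le hc0] at hσ
    have : σ ^ 2 - r ^ 2 ≤ 0 := by nlinarith [hσ.1, hσ.2]
    simp [h.of_nonpos' _ this]
  rcases le_total s r with hsr | hrs
  · exact hzero s hs hsr
  · refine (hzero r hr le_rfl).trans ?_
    rw [intervalIntegrable_iff_integrableOn_Ioc_of_le hrs]
    refine intervalIntegral.integrableOn_deriv_of_nonneg
      (g := fun σ => K (σ ^ 2 - r ^ 2) / 2) ?_ (fun σ hσ => ?_) (fun σ hσ => ?_)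
    · exact ((h.continuous.comp (by fun_prop)).div_const 2).continuousOn
    · exact h.hasDerivAt_sq_sub (by nlinarith [hσ.1, hσ.2])
    · exact mul_nonneg (hr.trans hσ.1.le) (h.nonneg _)

lemma IsKernelPrimitive.integral_eq {K K' : ℝ → ℝ} (h : IsKernelPrimitive K K')
    {r s : ℝ} (hr : 0 ≤ r) (hs : 0 ≤ s) :
    ∫ σ in 0..s, σ * K' (σ ^ 2 - r ^ 2) = K (s ^ 2 - r ^ 2) / 2 := by
  rw [integral_eq_of_hasDerivAt_off_countable_of_le (fun σ => K (σ ^ 2 - r ^ 2) / 2) _ hs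
    (countable_singleton r) ((h.continuous.comp (by fun_prop)).div_const 2).continuousOn
    (fun σ hσ => h.hasDerivAt_sq_sub ?_) (h.intervalIntegrable hr hs)]
  · rw [h.of_nonpos (0 ^ 2 - r ^ 2) (by nlinarith)]; simp
  · intro h0
    exact hσ.2 ((sq_eq_sq₀ hσ.1.1.le hr).1 (by linarith))

section WaveIntegral

variable {n : ℕ}

local notation "𝔼" n => EuclideanSpace ℝ (Fin n)

/-- The integral of `g` over `ℝⁿ` against the kernel `K (s² - |x - y|²)`. -/
def waveInt (K : ℝ → ℝ) (g : (𝔼 n) → ℝ) (x : 𝔼 n) (s : ℝ) : ℝ :=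
  ∫ y, K (s ^ 2 - ‖y‖ ^ 2) * g (x + y)

lemma hasCompactSupport_kernel {K : ℝ → ℝ} (hK : ∀ τ ≤ 0, K τ = 0) (s : ℝ) :
    HasCompactSupport (fun y : 𝔼 n => K (s ^ 2 - ‖y‖ ^ 2)) := by
  refine HasCompactSupport.intro (isCompact_closedBall (0 : 𝔼 n) |s|) fun y hy => hK _ ?_
  rw [mem_closedBall_zero_iff, not_le] at hy
  nlinarith [sq_abs s, abs_nonneg s]

lemma integrable_kernel_mul {K : ℝ → ℝ} (hK : ∀ τ ≤ 0, K τ = 0) (hKc : Continuous K) (s : ℝ)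
    {f : (𝔼 n) → ℝ} (hf : Continuous f) :
    Integrable (fun y : 𝔼 n => K (s ^ 2 - ‖y‖ ^ 2) * f y) :=
  Continuous.integrable_of_hasCompactSupport
    ((hKc.comp (by fun_prop)).mul hf) (hasCompactSupport_kernel hK s).mul_right

lemma IsKernelPrimitive.integrable_prod {K K' : ℝ → ℝ} (h : IsKernelPrimitive K K')
    {g : (𝔼 n) → ℝ} (hg : Continuous g) (x : 𝔼 n) {s : ℝ} (hs : 0 ≤ s) :
    Integrable (fun p : (𝔼 n) × ℝ => p.2 * (K' (p.2 ^ 2 - ‖p.1‖ ^ 2) * g (x + p.1)))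
      (volume.prod (volume.restrict (Ioc 0 s))) := by
  have hm : Measurable
      (fun p : (𝔼 n) × ℝ => p.2 * (K' (p.2 ^ 2 - ‖p.1‖ ^ 2) * g (x + p.1))) := by
    have := hg.measurable
    have := h.measurable
    fun_prop
  rw [integrable_prod_iff hm.aestronglyMeasurable]
  refine ⟨ae_of_all _ fun y => ?_, ?_⟩
  · have := ((intervalIntegrable_iff_integrableOn_Ioc_of_le hs).1
      (h.intervalIntegrable (norm_nonneg y) hs)).mul_const (g (x + y))
    simpa only [mul_assoc] using this
  · have (y : 𝔼 n) : ∫ σ in Ioc 0 s, ‖σ * (K' (σ ^ 2 - ‖y‖ ^ 2) * g (x + y))‖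
        = K (s ^ 2 - ‖y‖ ^ 2) * (|g (x + y)| / 2) := by
      have h1 := h.integral_eq (norm_nonneg y) hs
      rw [intervalIntegral.integral_of_le hs] at h1
      calc _ = ∫ σ in Ioc 0 s, σ * K' (σ ^ 2 - ‖y‖ ^ 2) * |g (x + y)| := by
            refine setIntegral_congr_fun measurableSet_Ioc fun σ hσ => ?_
            simp only [norm_mul, norm_eq_abs, abs_of_nonneg (h.nonneg _), abs_of_nonneg hσ.1.le]
            ring
        _ = _ := by rw [integral_mul_const, h1]; ring
    simp only [this]
    exact integrable_kernel_mul h.of_nonpos h.continuous s (by fun_prop)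

lemma IsKernelPrimitive.intervalIntegrable_waveInt {K K' : ℝ → ℝ} (h : IsKernelPrimitive K K')
    {g : (𝔼 n) → ℝ} (hg : Continuous g) (x : 𝔼 n) {s : ℝ} (hs : 0 ≤ s) :
    IntervalIntegrable (fun σ => σ * waveInt K' g x σ) volume 0 s := by
  rw [intervalIntegrable_iff_integrableOn_Ioc_of_le hs]
  have := (h.integrable_prod hg x hs).integral_prod_right
  simp only [integral_const_mul] at this
  exact this

lemma IsKernelPrimitive.waveInt_eq_integral {K K' : ℝ → ℝ} (h : IsKernelPrimitive K K')
    {g : (𝔼 n) → ℝ} (hg : Continuous g) (x : 𝔼 n) {s : ℝ} (hs : 0 ≤ s) :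
    waveInt K g x s = 2 * ∫ σ in 0..s, σ * waveInt K' g x σ := by
  have hsw := integral_integral_swap (f := fun (y : 𝔼 n) (σ : ℝ) =>
    σ * (K' (σ ^ 2 - ‖y‖ ^ 2) * g (x + y))) (h.integrable_prod hg x hs)
  simp only [integral_const_mul] at hsw
  rw [intervalIntegral.integral_of_le hs]
  simp only [waveInt]
  rw [← hsw, ← integral_const_mul]
  congr 1 with y
  have h1 := h.integral_eq (norm_nonneg y) hs
  rw [intervalIntegral.integral_of_le hs] at h1
  simp only [← mul_assoc]
  rw [integral_mul_const, h1]
  ring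

lemma IsKernelPrimitive.hasDerivAt_waveInt {K K' : ℝ → ℝ} (h : IsKernelPrimitive K K')
    {g : (𝔼 n) → ℝ} (hg : Continuous g) (x : 𝔼 n)
    (hc : ContinuousOn (waveInt K' g x) (Ioi 0)) {s : ℝ} (hs : 0 < s) :
    HasDerivAt (waveInt K g x) (2 * (s * waveInt K' g x s)) s := by
  have hc' : ContinuousOn (fun σ => σ * waveInt K' g x σ) (Ioi 0) := continuousOn_id.mul hc
  have := (intervalIntegral.integral_hasDerivAt_right (h.intervalIntegrable_waveInt hg x hs.le)
    (hc'.stronglyMeasurableAtFilter isOpen_Ioi s hs)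
    (hc'.continuousAt (Ioi_mem_nhds hs))).const_mul 2
  refine this.congr_of_eventuallyEq ?_
  filter_upwards [Ioi_mem_nhds hs] with σ hσ using h.waveInt_eq_integral hg x (le_of_lt hσ)

/-- The Laplacian, expressed through Fréchet derivatives. -/
def fderivLap (g : (𝔼 n) → ℝ) (x : 𝔼 n) : ℝ :=
  ∑ i : Fin n, fderiv ℝ (fun z => fderiv ℝ g z (EuclideanSpace.single i 1)) x
    (EuclideanSpace.single i 1)

lemma contDiff_fderiv_apply {g : (𝔼 n) → ℝ} (hg : ContDiff ℝ (⊤ : ℕ∞) g) (v : 𝔼 n) :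
    ContDiff ℝ (⊤ : ℕ∞) (fun z => fderiv ℝ g z v) :=
  (hg.fderiv_right (m := (⊤ : ℕ∞)) (by simp)).clm_apply contDiff_const

lemma contDiff_fderivLap {g : (𝔼 n) → ℝ} (hg : ContDiff ℝ (⊤ : ℕ∞) g) :
    ContDiff ℝ (⊤ : ℕ∞) (fderivLap g) :=
  ContDiff.sum fun _ _ => contDiff_fderiv_apply (contDiff_fderiv_apply hg _) _

lemma integral_mul_fderiv_comp_add {f f' g : (𝔼 n) → ℝ} {v : 𝔼 n} (hfd : Differentiable ℝ f)
    (hf' : ∀ y, fderiv ℝ f y v = f' y) (hfc' : Continuous f') (hfs : HasCompactSupport f)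
    (hfs' : HasCompactSupport f') (hg : ContDiff ℝ (⊤ : ℕ∞) g) (x : 𝔼 n) :
    ∫ y, f y * fderiv ℝ g (x + y) v = - ∫ y, f' y * g (x + y) := by
  have hgc : Continuous fun y => g (x + y) := hg.continuous.comp (by fun_prop)
  have hgd (y : 𝔼 n) : fderiv ℝ (fun y => g (x + y)) y = fderiv ℝ g (x + y) :=
    fderiv_comp_add_left x
  have := integral_mul_fderiv_eq_neg_fderiv_mul_of_integrable (μ := (volume : Measure (𝔼 n)))
    (f := f) (g := fun y => g (x + y)) (v := v) ?_ ?_ ?_ (fun y _ => hfd y) (fun y _ => ?_)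
  · simpa only [hf', hgd] using this
  · simp only [hf']
    exact (hfc'.mul hgc).integrable_of_hasCompactSupport hfs'.mul_right
  · simp only [hgd]
    exact (hfd.continuous.mul ((contDiff_fderiv_apply hg v).continuous.comp
      (by fun_prop))).integrable_of_hasCompactSupport hfs.mul_right
  · exact (hfd.continuous.mul hgc).integrable_of_hasCompactSupport hfs.mul_right
  · exact (hg.differentiable (by simp)).comp (by fun_prop) y

lemma hasFDerivAt_kernel {K : ℝ → ℝ} {K' s : ℝ} {y : 𝔼 n}
    (hK : HasDerivAt K K' (s ^ 2 - ‖y‖ ^ 2)) :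
    HasFDerivAt (fun y : 𝔼 n => K (s ^ 2 - ‖y‖ ^ 2)) (-(2 * K') • innerSL ℝ y) y := by
  have h1 : HasFDerivAt (fun y : 𝔼 n => s ^ 2 - ‖y‖ ^ 2) (-(2 • innerSL ℝ y)) y :=
    (hasStrictFDerivAt_norm_sq y).hasFDerivAt.const_sub _
  refine (hK.comp_hasFDerivAt y h1).congr_fderiv ?_
  ext z
  simp
  ring

lemma integral_kernel₃_mul_fderiv_fderiv {g : (𝔼 n) → ℝ} (hg : ContDiff ℝ (⊤ : ℕ∞) g)
    (x : 𝔼 n) (s : ℝ) (i : Fin n) :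
    ∫ y, kernel₃ (s ^ 2 - ‖y‖ ^ 2) *
      fderiv ℝ (fun z => fderiv ℝ g z (EuclideanSpace.single i 1)) (x + y)
        (EuclideanSpace.single i 1)
      = ∫ y, (4 * y i ^ 2 * kernel₁ (s ^ 2 - ‖y‖ ^ 2) - 2 * kernel₂ (s ^ 2 - ‖y‖ ^ 2))
        * g (x + y) := by
  have h2 (y : 𝔼 n) := hasFDerivAt_kernel (hasDerivAt_kernel₂ (s ^ 2 - ‖y‖ ^ 2))
  have h3 (y : 𝔼 n) := hasFDerivAt_kernel (hasDerivAt_kernel₃ (s ^ 2 - ‖y‖ ^ 2))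
  have c1 : Continuous fun y : 𝔼 n => kernel₁ (s ^ 2 - ‖y‖ ^ 2) :=
    continuous_kernel₁.comp (by fun_prop)
  have c2 : Continuous fun y : 𝔼 n => kernel₂ (s ^ 2 - ‖y‖ ^ 2) :=
    continuous_kernel₂.comp (by fun_prop)
  have s1 := hasCompactSupport_kernel (n := n) (fun _ => kernel₁_of_nonpos) s
  have s2 := hasCompactSupport_kernel (n := n) (fun _ => kernel₂_of_nonpos) s
  have s3 := hasCompactSupport_kernel (n := n) (fun _ => kernel₃_of_nonpos) s
  have hi (y : 𝔼 n) : HasFDerivAt (fun y : 𝔼 n => y i) (EuclideanSpace.proj i : (𝔼 n) →L[ℝ] ℝ) y :=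
    (EuclideanSpace.proj i : (𝔼 n) →L[ℝ] ℝ).hasFDerivAt
  have hd (y : 𝔼 n) : HasFDerivAt (fun y : 𝔼 n => -2 * (y i * kernel₂ (s ^ 2 - ‖y‖ ^ 2))) _ y :=
    ((hi y).mul (h2 y)).const_mul (-2)
  have e3 (y : 𝔼 n) : fderiv ℝ (fun y : 𝔼 n => kernel₃ (s ^ 2 - ‖y‖ ^ 2)) y
      (EuclideanSpace.single i 1) = -2 * (y i * kernel₂ (s ^ 2 - ‖y‖ ^ 2)) := by
    rw [(h3 y).fderiv]
    simp [EuclideanSpace.inner_single_right]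
    ring
  have e2 (y : 𝔼 n) : fderiv ℝ (fun y : 𝔼 n => -2 * (y i * kernel₂ (s ^ 2 - ‖y‖ ^ 2))) y
      (EuclideanSpace.single i 1)
      = 4 * y i ^ 2 * kernel₁ (s ^ 2 - ‖y‖ ^ 2) - 2 * kernel₂ (s ^ 2 - ‖y‖ ^ 2) := by
    rw [(hd y).fderiv]
    simp [EuclideanSpace.inner_single_right]
    ring
  rw [integral_mul_fderiv_comp_add (fun y => (h3 y).differentiableAt) e3 (by fun_prop) s3
    s2.mul_left.mul_left (contDiff_fderiv_apply hg _),
    integral_mul_fderiv_comp_add (fun y => (hd y).differentiableAt) e2 (by fun_prop)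
      s2.mul_left.mul_left (s1.mul_left.sub s2.mul_left) hg, neg_neg]

lemma waveInt_kernel₃_fderivLap {g : (𝔼 n) → ℝ} (hg : ContDiff ℝ (⊤ : ℕ∞) g) (x : 𝔼 n) (s : ℝ) :
    waveInt kernel₃ (fderivLap g) x s = 4 * s ^ 2 * waveInt kernel₁ g x s
      - (2 * n + 6) * waveInt kernel₂ g x s - 1 / 4 * waveInt kernel₃ g x s := by
  have c1 : Continuous fun y : 𝔼 n => kernel₁ (s ^ 2 - ‖y‖ ^ 2) :=
    continuous_kernel₁.comp (by fun_prop)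
  have c2 : Continuous fun y : 𝔼 n => kernel₂ (s ^ 2 - ‖y‖ ^ 2) :=
    continuous_kernel₂.comp (by fun_prop)
  have s1 := hasCompactSupport_kernel (n := n) (fun _ => kernel₁_of_nonpos) s
  have s2 := hasCompactSupport_kernel (n := n) (fun _ => kernel₂_of_nonpos) s
  have hgc : Continuous fun y => g (x + y) := hg.continuous.comp (by fun_prop)
  have i1 := integrable_kernel_mul (fun _ => kernel₁_of_nonpos) continuous_kernel₁ s hgc
  have i2 := integrable_kernel_mul (fun _ => kernel₂_of_nonpos) continuous_kernel₂ s hgc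
  have i3 := integrable_kernel_mul (fun _ => kernel₃_of_nonpos) continuous_kernel₃ s hgc
  have i12 : Integrable (fun y => 4 * s ^ 2 * (kernel₁ (s ^ 2 - ‖y‖ ^ 2) * g (x + y))
      - (2 * n + 6) * (kernel₂ (s ^ 2 - ‖y‖ ^ 2) * g (x + y))) :=
    (i1.const_mul _).sub (i2.const_mul _)
  simp only [waveInt, fderivLap, Finset.mul_sum]
  rw [integral_finsetSum]
  · simp only [integral_kernel₃_mul_fderiv_fderiv hg]
    rw [← integral_finsetSum, ← integral_const_mul, ← integral_const_mul, ← integral_const_mul,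
      ← integral_sub (i1.const_mul _) (i2.const_mul _),
      ← integral_sub i12 (i3.const_mul _)]
    · congr 1 with y
      have hy : ∑ i, y i ^ 2 = ‖y‖ ^ 2 := (EuclideanSpace.real_norm_sq_eq y).symm
      rw [← Finset.sum_mul, Finset.sum_sub_distrib, ← Finset.sum_mul, ← Finset.mul_sum, hy]
      simp only [kernel₃, Finset.sum_const, Finset.card_univ, Fintype.card_fin, nsmul_eq_mul]
      ring
    · intro i _
      exact Continuous.integrable_of_hasCompactSupport (by fun_prop)
        (s1.mul_left.sub s2.mul_left).mul_right
  · intro i _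
    exact integrable_kernel_mul (fun _ => kernel₃_of_nonpos) continuous_kernel₃ s
      ((contDiff_fderiv_apply (contDiff_fderiv_apply hg _) _).continuous.comp (by fun_prop))

/-! ### The weight `(1 - |z|²)^(-1/2)` on the unit ball -/

lemma cos_image_Ioo : Real.cos '' Ioo 0 (π / 2) = Ioo 0 1 := by
  ext r
  constructor
  · rintro ⟨θ, hθ, rfl⟩
    refine ⟨cos_pos_of_mem_Ioo ⟨by linarith [hθ.1, pi_pos], hθ.2⟩, ?_⟩
    rw [← cos_zero]
    exact cos_lt_cos_of_nonneg_of_le_pi le_rfl (by linarith [hθ.2, pi_pos]) hθ.1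
  · rintro ⟨h0, h1⟩
    exact ⟨arccos r, ⟨arccos_pos.2 h1, arccos_lt_pi_div_two.2 h0⟩,
      cos_arccos (by linarith) h1.le⟩

lemma abs_neg_sin_smul_weight {θ : ℝ} (hθ : θ ∈ Ioo 0 (π / 2)) (k : ℕ) :
    |-sin θ| • (cos θ ^ k • (√(1 - cos θ ^ 2))⁻¹) = cos θ ^ k := by
  have hs : 0 < sin θ := sin_pos_of_mem_Ioo ⟨hθ.1, by linarith [hθ.2, pi_pos]⟩
  have : 1 - cos θ ^ 2 = sin θ ^ 2 := by linarith [sin_sq_add_cos_sq θ]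
  rw [this, sqrt_sq hs.le, abs_neg, abs_of_pos hs]
  simp only [smul_eq_mul]
  field_simp

lemma injOn_cos_Ioo : InjOn Real.cos (Ioo 0 (π / 2)) :=
  injOn_cos.mono (Ioo_subset_Icc_self.trans (Icc_subset_Icc le_rfl (by linarith [pi_pos])))

lemma integrableOn_pow_weight (k : ℕ) :
    IntegrableOn (fun r : ℝ => r ^ k • (√(1 - r ^ 2))⁻¹) (Ioi 0) := by
  have h1 : IntegrableOn (fun r : ℝ => r ^ k • (√(1 - r ^ 2))⁻¹) (Ioo 0 1) := by
    rw [← cos_image_Ioo, integrableOn_image_iff_integrableOn_abs_deriv_smul measurableSet_Ioo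
      (fun θ _ => (hasDerivAt_cos θ).hasDerivWithinAt) injOn_cos_Ioo]
    refine IntegrableOn.congr_fun (f := fun θ => cos θ ^ k) ?_
      (fun θ hθ => (abs_neg_sin_smul_weight hθ k).symm) measurableSet_Ioo
    exact ((by fun_prop : Continuous fun θ => cos θ ^ k).integrableOn_Icc (a := 0)
      (b := π / 2)).mono_set Ioo_subset_Icc_self
  refine h1.of_forall_sdiff_eq_zero measurableSet_Ioi fun r hr => ?_
  have hr1 : 1 ≤ r := by
    by_contra! h
    exact hr.2 ⟨mem_Ioi.1 hr.1, h⟩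
  rw [sqrt_eq_zero_of_nonpos (by nlinarith)]
  simp

lemma integral_pow_weight (k : ℕ) :
    ∫ r in Ioi (0 : ℝ), r ^ k • (√(1 - r ^ 2))⁻¹ = 1 / 2 * ∫ θ in 0..π, sin θ ^ k := by
  rw [← EulerSine.integral_cos_pow_eq, intervalIntegral.integral_of_le (by positivity),
    integral_Ioc_eq_integral_Ioo,
    setIntegral_eq_of_subset_of_forall_sdiff_eq_zero (s := Ioo (0 : ℝ) 1) measurableSet_Ioi
      (fun r hr => hr.1) (fun r hr => ?_), ← cos_image_Ioo,
    integral_image_eq_integral_abs_deriv_smul measurableSet_Ioo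
      (fun θ _ => (hasDerivAt_cos θ).hasDerivWithinAt) injOn_cos_Ioo]
  · exact setIntegral_congr_fun measurableSet_Ioo fun θ hθ => abs_neg_sin_smul_weight hθ k
  · have hr1 : 1 ≤ r := by
      by_contra! h
      exact hr.2 ⟨mem_Ioi.1 hr.1, h⟩
    rw [sqrt_eq_zero_of_nonpos (by nlinarith)]
    simp

lemma integrable_weight (hn : 0 < n) : Integrable fun z : 𝔼 n => (√(1 - ‖z‖ ^ 2))⁻¹ := by
  have : Nonempty (Fin n) := ⟨⟨0, hn⟩⟩
  exact (integrable_fun_norm_addHaar volume (f := fun r => (√(1 - r ^ 2))⁻¹)).2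
    (integrableOn_pow_weight _)

/-- The odd double factorial `(2k+1)!! = 3 · 5 ⋯ (2k+1)`. -/
def oddFactorial (k : ℕ) : ℝ := ∏ i ∈ Finset.range k, (2 * (i : ℝ) + 3)

lemma oddFactorial_pos (k : ℕ) : 0 < oddFactorial k := Finset.prod_pos fun _ _ => by positivity

lemma prod_range_two_mul_add_two (k : ℕ) :
    ∏ i ∈ Finset.range k, (2 * (i : ℝ) + 2) = 2 ^ k * k ! := by
  induction k with
  | zero => simp
  | succ k ih =>
    rw [Finset.prod_range_succ, ih, Nat.factorial_succ]
    push_cast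
    ring

lemma integral_weight (k : ℕ) :
    ∫ z : 𝔼 (2 * (k + 1)), (√(1 - ‖z‖ ^ 2))⁻¹ = (2 * π) ^ (k + 1) / oddFactorial k := by
  have : Nonempty (Fin (2 * (k + 1))) := ⟨⟨0, by omega⟩⟩
  have hd : Module.finrank ℝ (𝔼 (2 * (k + 1))) = 2 * (k + 1) := finrank_euclideanSpace_fin
  have hv : (volume : Measure (𝔼 (2 * (k + 1)))).real (ball 0 1) = π ^ (k + 1) / (k + 1 : ℕ)! := by
    rw [Measure.real, InnerProductSpace.volume_ball_of_dim_even hd]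
    simp
    positivity
  have := integral_fun_norm_addHaar (volume : Measure (𝔼 (2 * (k + 1))))
    (fun r => (√(1 - r ^ 2))⁻¹)
  rw [this, integral_pow_weight, hd, hv, show 2 * (k + 1) - 1 = 2 * k + 1 by omega,
    integral_sin_pow_odd, Finset.prod_div_distrib, prod_range_two_mul_add_two, Nat.factorial_succ, oddFactorial]
  have := oddFactorial_pos k
  rw [oddFactorial] at this
  simp only [nsmul_eq_mul, smul_eq_mul]
  push_cast
  field_simp
  ring

/-- The graph of the upper unit hemisphere over the unit ball, extended boundedly. -/
def hemisphere (z : 𝔼 n) : (𝔼 n) × ℝ := (if ‖z‖ ≤ 1 then z else 0, √(1 - ‖z‖ ^ 2))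

lemma measurable_hemisphere : Measurable (hemisphere : (𝔼 n) → _) := by
  refine Measurable.prodMk ?_ (by fun_prop)
  exact Measurable.ite (measurableSet_le measurable_norm measurable_const) measurable_id
    measurable_const

lemma hemisphere_mem (z : 𝔼 n) : hemisphere z ∈ closedBall (0 : (𝔼 n) × ℝ) 1 := by
  rw [mem_closedBall_zero_iff, Prod.norm_def, max_le_iff]
  constructor
  · simp only [hemisphere]
    split_ifs with h
    · exact h
    · simp
  · simp only [hemisphere, norm_eq_abs, abs_of_nonneg (sqrt_nonneg _)]
    exact sqrt_le_one.2 (by nlinarith [sq_nonneg ‖z‖])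

/-- The integrand of `waveInt kernel₀` after rescaling the ball of radius `s` to the unit ball. -/
def scaledIntegrand (g : (𝔼 n) → ℝ) (p : ((𝔼 n) × ℝ) × ((𝔼 n) × ℝ)) : ℝ :=
  cosh (1 / 2 * (p.1.2 * p.2.2)) * g (p.1.1 + p.1.2 • p.2.1)

lemma contDiff_scaledIntegrand {g : (𝔼 n) → ℝ} (hg : ContDiff ℝ (⊤ : ℕ∞) g) :
    ContDiff ℝ (⊤ : ℕ∞) (scaledIntegrand g) := by
  refine ContDiff.mul (ContDiff.cosh (by fun_prop)) (hg.comp (by fun_prop))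

/-- The integral `waveInt kernel₀`, up to a power of `s`, as a smooth function of `(x, s)`. -/
def scaledInt (g : (𝔼 n) → ℝ) (q : (𝔼 n) × ℝ) : ℝ :=
  ∫ z : 𝔼 n, (√(1 - ‖z‖ ^ 2))⁻¹ • scaledIntegrand g (q, hemisphere z)

lemma contDiff_scaledInt (hn : 0 < n) {g : (𝔼 n) → ℝ} (hg : ContDiff ℝ (⊤ : ℕ∞) g) :
    ContDiff ℝ (⊤ : ℕ∞) (scaledInt g) :=
  contDiff_integral_smul_comp (integrable_weight hn) measurable_hemisphere
    (isCompact_closedBall 0 1) hemisphere_mem (contDiff_scaledIntegrand hg)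

lemma scaledInt_zero (g : (𝔼 n) → ℝ) (x : 𝔼 n) :
    scaledInt g (x, 0) = (∫ z : 𝔼 n, (√(1 - ‖z‖ ^ 2))⁻¹) * g x := by
  simp [scaledInt, scaledIntegrand, integral_mul_const]

lemma kernel₀_scaled {s : ℝ} (hs : 0 < s) (z : 𝔼 n) (g : (𝔼 n) → ℝ) (x : 𝔼 n) :
    kernel₀ (s ^ 2 - ‖s • z‖ ^ 2) * g (x + s • z)
      = s⁻¹ * ((√(1 - ‖z‖ ^ 2))⁻¹ • scaledIntegrand g ((x, s), hemisphere z)) := by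
  have h1 : √(s ^ 2 - ‖s • z‖ ^ 2) = s * √(1 - ‖z‖ ^ 2) := by
    rw [norm_smul, norm_eq_abs, abs_of_pos hs,
      show s ^ 2 - (s * ‖z‖) ^ 2 = s ^ 2 * (1 - ‖z‖ ^ 2) by ring, sqrt_mul (sq_nonneg s),
      sqrt_sq hs.le]
  rw [kernel₀, h1]
  rcases le_or_gt ‖z‖ 1 with hz | hz
  · simp only [scaledIntegrand, hemisphere, if_pos hz, smul_eq_mul, div_eq_mul_inv, mul_inv]
    ring
  · have : √(1 - ‖z‖ ^ 2) = 0 := sqrt_eq_zero_of_nonpos (by nlinarith)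
    simp [this]

lemma waveInt_kernel₀ (hn : 0 < n) (g : (𝔼 n) → ℝ) (x : 𝔼 n) {s : ℝ} (hs : 0 < s) :
    waveInt kernel₀ g x s = s ^ (n - 1) * scaledInt g (x, s) := by
  have := Measure.integral_comp_smul (volume : Measure (𝔼 n))
    (fun y => kernel₀ (s ^ 2 - ‖y‖ ^ 2) * g (x + y)) s
  simp only [kernel₀_scaled hs, integral_const_mul, finrank_euclideanSpace_fin, smul_eq_mul] at this
  rw [abs_of_pos (by positivity)] at this
  obtain ⟨m, rfl⟩ : ∃ m, n = m + 1 := ⟨n - 1, by omega⟩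
  rw [waveInt, scaledInt, Nat.add_sub_cancel]
  rw [← inv_mul_cancel_left₀ (pow_pos hs (m + 1)).ne' (∫ y, _), mul_left_comm, ← this]
  simp only [smul_eq_mul]
  field_simp
  ring

/-! ### Functions smooth on `ℝⁿ × (0, ∞)` -/

/-- `H` is smooth on `ℝⁿ × (0, ∞)`. -/
def SmoothOnPos (H : (𝔼 n) → ℝ → ℝ) : Prop :=
  ContDiffOn ℝ (⊤ : ℕ∞) (fun p : (𝔼 n) × ℝ => H p.1 p.2) (univ ×ˢ Ioi 0)

lemma isOpen_univ_prod_Ioi : IsOpen ((univ : Set (𝔼 n)) ×ˢ Ioi (0 : ℝ)) :=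
  isOpen_univ.prod isOpen_Ioi

lemma SmoothOnPos.contDiffAt {H : (𝔼 n) → ℝ → ℝ} (hH : SmoothOnPos H) (x : 𝔼 n) {s : ℝ}
    (hs : 0 < s) : ContDiffAt ℝ (⊤ : ℕ∞) (fun p : (𝔼 n) × ℝ => H p.1 p.2) (x, s) :=
  ContDiffOn.contDiffAt hH (isOpen_univ_prod_Ioi.mem_nhds ⟨mem_univ x, hs⟩)

lemma SmoothOnPos.differentiableAt {H : (𝔼 n) → ℝ → ℝ} (hH : SmoothOnPos H) (x : 𝔼 n) {s : ℝ}
    (hs : 0 < s) : DifferentiableAt ℝ (fun p : (𝔼 n) × ℝ => H p.1 p.2) (x, s) :=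
  (hH.contDiffAt x hs).differentiableAt (by simp)

lemma SmoothOnPos.hasDerivAt {H : (𝔼 n) → ℝ → ℝ} (hH : SmoothOnPos H) (x : 𝔼 n) {s : ℝ}
    (hs : 0 < s) :
    HasDerivAt (H x) (fderiv ℝ (fun p : (𝔼 n) × ℝ => H p.1 p.2) (x, s) (0, 1)) s :=
  (hH.differentiableAt x hs).hasFDerivAt.comp_hasDerivAt s
    ((hasDerivAt_const s x).prodMk (hasDerivAt_id s))

lemma SmoothOnPos.hasDerivAt_line {H : (𝔼 n) → ℝ → ℝ} (hH : SmoothOnPos H) (x v : 𝔼 n) {s : ℝ}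
    (hs : 0 < s) :
    HasDerivAt (fun a : ℝ => H (x + a • v) s)
      (fderiv ℝ (fun p : (𝔼 n) × ℝ => H p.1 p.2) (x, s) (v, 0)) 0 := by
  have h1 : HasDerivAt (fun a : ℝ => (x + a • v, s)) (v, (0 : ℝ)) 0 := by
    simpa using (((hasDerivAt_id (0 : ℝ)).smul_const v).const_add x).prodMk (hasDerivAt_const 0 s)
  have h2 : HasFDerivAt (fun p : (𝔼 n) × ℝ => H p.1 p.2)
      (fderiv ℝ (fun p : (𝔼 n) × ℝ => H p.1 p.2) (x, s)) (x + (0 : ℝ) • v, s) := by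
    simpa using (hH.differentiableAt x hs).hasFDerivAt
  exact h2.comp_hasDerivAt (0 : ℝ) h1

lemma SmoothOnPos.fderiv_apply {H : (𝔼 n) → ℝ → ℝ} (hH : SmoothOnPos H) (w : (𝔼 n) × ℝ) :
    SmoothOnPos fun x s => fderiv ℝ (fun p : (𝔼 n) × ℝ => H p.1 p.2) (x, s) w :=
  (ContDiffOn.fderiv_of_isOpen hH isOpen_univ_prod_Ioi (m := (⊤ : ℕ∞)) (by simp)).clm_apply
    contDiffOn_const

lemma SmoothOnPos.congr {H H' : (𝔼 n) → ℝ → ℝ} (hH : SmoothOnPos H)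
    (h : ∀ x s, 0 < s → H' x s = H x s) : SmoothOnPos H' :=
  ContDiffOn.congr hH fun p hp => h p.1 p.2 hp.2

lemma SmoothOnPos.mul {H H' : (𝔼 n) → ℝ → ℝ} (hH : SmoothOnPos H) (hH' : SmoothOnPos H') :
    SmoothOnPos fun x s => H x s * H' x s :=
  ContDiffOn.mul hH hH'

lemma SmoothOnPos.deriv_time {H : (𝔼 n) → ℝ → ℝ} (hH : SmoothOnPos H) :
    SmoothOnPos fun x s => deriv (H x) s :=
  (hH.fderiv_apply (0, 1)).congr fun x _ hs => (hH.hasDerivAt x hs).deriv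

lemma smoothOnPos_of_contDiffOn {c : ℝ → ℝ} (hc : ContDiffOn ℝ (⊤ : ℕ∞) c (Ioi 0)) :
    SmoothOnPos fun (_ : 𝔼 n) s => c s :=
  hc.comp contDiffOn_snd fun _ hp => hp.2

lemma contDiffOn_one_div : ContDiffOn ℝ (⊤ : ℕ∞) (fun s : ℝ => 1 / s) (Ioi 0) :=
  contDiffOn_const.div contDiffOn_id fun _ hs => (mem_Ioi.1 hs).ne'

lemma SmoothOnPos.iterOp_time {H : (𝔼 n) → ℝ → ℝ} (hH : SmoothOnPos H) (k : ℕ) :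
    SmoothOnPos fun x s => iterOp k (H x) s := by
  induction k with
  | zero => exact hH
  | succ k ih => exact (smoothOnPos_of_contDiffOn contDiffOn_one_div).mul ih.deriv_time

/-- `H'` is the derivative of `H` in the direction `v` of the space variable. -/
def IsSpaceDeriv (v : 𝔼 n) (H H' : (𝔼 n) → ℝ → ℝ) : Prop :=
  ∀ x s, 0 < s → HasDerivAt (fun a : ℝ => H (x + a • v) s) (H' x s) 0

lemma IsSpaceDeriv.hasDerivAt {v : 𝔼 n} {H H' : (𝔼 n) → ℝ → ℝ} (h : IsSpaceDeriv v H H')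
    (x : 𝔼 n) {s : ℝ} (hs : 0 < s) (b : ℝ) :
    HasDerivAt (fun a : ℝ => H (x + a • v) s) (H' (x + b • v) s) b := by
  have h1 := h (x + b • v) s hs
  rw [← sub_self b] at h1
  have h2 := h1.comp_sub_const b b
  simpa [add_assoc, ← add_smul] using h2

lemma IsSpaceDeriv.deriv_time {v : 𝔼 n} {H H' : (𝔼 n) → ℝ → ℝ} (h : IsSpaceDeriv v H H')
    (hH : SmoothOnPos H) :
    IsSpaceDeriv v (fun x s => deriv (H x) s) (fun x s => deriv (H' x) s) := by
  intro x s hs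
  set Φ : (𝔼 n) × ℝ → ℝ := fun p => H p.1 p.2
  have hΦ := hH.contDiffAt x hs
  have hd : DifferentiableAt ℝ (fderiv ℝ Φ) (x, s) :=
    (hΦ.fderiv_right (m := (⊤ : ℕ∞)) (by simp)).differentiableAt (by simp)
  have hcomm : fderiv ℝ (fderiv ℝ Φ) (x, s) (v, 0) (0, 1)
      = fderiv ℝ (fderiv ℝ Φ) (x, s) (0, 1) (v, 0) :=
    (contDiffAt_infty.1 hΦ 2).isSymmSndFDerivAt (by simp) _ _
  have happ (w : (𝔼 n) × ℝ) (q : (𝔼 n) × ℝ) :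
      fderiv ℝ (fun p => fderiv ℝ Φ p w) (x, s) q = fderiv ℝ (fderiv ℝ Φ) (x, s) q w := by
    rw [fderiv_clm_apply hd (differentiableAt_const w)]
    simp
  have h1 := (hH.fderiv_apply (0, 1)).hasDerivAt_line x v hs
  have h2 := (hH.fderiv_apply (v, 0)).hasDerivAt x hs
  simp only [Prod.mk.eta] at h1 h2
  change HasDerivAt _ (fderiv ℝ (fun p => fderiv ℝ Φ p (0, 1)) (x, s) (v, 0)) _ at h1
  change HasDerivAt _ (fderiv ℝ (fun p => fderiv ℝ Φ p (v, 0)) (x, s) (0, 1)) _ at h2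
  rw [happ, hcomm] at h1
  rw [happ] at h2
  have h3 : deriv (H' x) s = fderiv ℝ (fderiv ℝ Φ) (x, s) (0, 1) (v, 0) := by
    rw [← h2.deriv]
    refine EventuallyEq.deriv_eq ?_
    filter_upwards [Ioi_mem_nhds hs] with σ hσ
    exact (h x σ hσ).unique (hH.hasDerivAt_line x v hσ)
  simp only [h3]
  refine h1.congr_of_eventuallyEq (Eventually.of_forall fun a => ?_)
  exact (hH.hasDerivAt _ hs).deriv

lemma IsSpaceDeriv.iterOp_time {v : 𝔼 n} {H H' : (𝔼 n) → ℝ → ℝ} (h : IsSpaceDeriv v H H')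
    (hH : SmoothOnPos H) (k : ℕ) :
    IsSpaceDeriv v (fun x s => iterOp k (H x) s) (fun x s => iterOp k (H' x) s) := by
  induction k with
  | zero => exact h
  | succ k ih =>
    intro x s hs
    exact (ih.deriv_time (hH.iterOp_time k) x s hs).const_mul (1 / s)

lemma lap_eq_of_isSpaceDeriv {H : (𝔼 n) → ℝ → ℝ} {H₁ H₂ : Fin n → (𝔼 n) → ℝ → ℝ}
    (h₁ : ∀ i, IsSpaceDeriv (EuclideanSpace.single i 1) H (H₁ i))
    (h₂ : ∀ i, IsSpaceDeriv (EuclideanSpace.single i 1) (H₁ i) (H₂ i)) (x : 𝔼 n) {s : ℝ}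
    (hs : 0 < s) : lap (fun z => H z s) x = ∑ i, H₂ i x s := by
  refine Finset.sum_congr rfl fun i _ => ?_
  rw [iteratedDeriv_succ, iteratedDeriv_one,
    show deriv (fun a : ℝ => H (x + a • EuclideanSpace.single i (1 : ℝ)) s) = _ from
      funext fun b => ((h₁ i).hasDerivAt x hs b).deriv]
  exact (h₂ i x s hs).deriv


/-! ### Iterates of `(1/t) d/dt` on the half-line -/

lemma SmoothOnPos.hasDerivAt_iterOp {H : (𝔼 n) → ℝ → ℝ} (hH : SmoothOnPos H) (x : 𝔼 n) (k : ℕ)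
    {s : ℝ} (hs : 0 < s) : HasDerivAt (iterOp k (H x)) (s * iterOp (k + 1) (H x) s) s := by
  have h := (hH.iterOp_time k).hasDerivAt x hs
  refine h.congr_deriv ?_
  rw [← h.deriv, iterOp]
  field_simp

lemma iterOp_congr {F G : ℝ → ℝ} (h : ∀ s, 0 < s → F s = G s) (k : ℕ) :
    ∀ s, 0 < s → iterOp k F s = iterOp k G s := by
  induction k with
  | zero => exact h
  | succ k ih =>
    intro s hs
    rw [iterOp, iterOp, EventuallyEq.deriv_eq (eventually_of_mem (Ioi_mem_nhds hs) ih)]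

lemma iterOp_sum {ι : Type} {S : Finset ι} {F : ι → ℝ → ℝ}
    (hF : ∀ i k s, 0 < s → HasDerivAt (iterOp k (F i)) (s * iterOp (k + 1) (F i) s) s) (k : ℕ) :
    ∀ s, 0 < s → iterOp k (fun s => ∑ i ∈ S, F i s) s = ∑ i ∈ S, iterOp k (F i) s := by
  induction k with
  | zero => exact fun _ _ => rfl
  | succ k ih =>
    intro s hs
    rw [iterOp, EventuallyEq.deriv_eq (eventually_of_mem (Ioi_mem_nhds hs) ih),
      (HasDerivAt.fun_sum fun i _ => hF i k s hs).deriv, ← Finset.mul_sum, one_div,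
      inv_mul_cancel_left₀ hs.ne']

lemma iterOp_of_eq_second_order {F h : ℝ → ℝ}
    (hF : ∀ k s, 0 < s → HasDerivAt (iterOp k F) (s * iterOp (k + 1) F s) s) {b c : ℝ}
    (h0 : ∀ s, 0 < s → h s = s ^ 2 * iterOp 2 F s + b * iterOp 1 F s + c * F s) (k : ℕ) :
    ∀ s, 0 < s → iterOp k h s
      = s ^ 2 * iterOp (k + 2) F s + (b + 2 * k) * iterOp (k + 1) F s + c * iterOp k F s := by
  induction k with
  | zero =>
    intro s hs
    simpa [iterOp] using h0 s hs
  | succ k ih =>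
    intro s hs
    have h1 := (((hasDerivAt_pow 2 s).mul (hF (k + 2) s hs)).add
      ((hF (k + 1) s hs).const_mul (b + 2 * k))).add ((hF k s hs).const_mul c)
    rw [iterOp, EventuallyEq.deriv_eq (eventually_of_mem (Ioi_mem_nhds hs) ih)]
    refine (congrArg (1 / s * ·) h1.deriv).trans ?_
    push_cast
    field_simp
    ring

lemma iterOp_pow_mul (k : ℕ) : ∀ {G : ℝ → ℝ}, ContDiff ℝ (⊤ : ℕ∞) G →
    ∃ H : ℝ → ℝ, ContDiff ℝ (⊤ : ℕ∞) H ∧ H 0 = oddFactorial k * G 0 ∧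
      ∀ s, 0 < s → iterOp k (fun s => s ^ (2 * k + 1) * G s) s = s * H s := by
  have hshift (k : ℕ) (F : ℝ → ℝ) (s : ℝ) :
      iterOp (k + 1) F s = iterOp k (iterOp 1 F) s := by
    induction k generalizing s with
    | zero => rfl
    | succ k ih => rw [iterOp, show iterOp (k + 1) F = _ from funext ih]; rfl
  induction k with
  | zero => exact fun {G} hG => ⟨G, hG, by simp [oddFactorial], fun s _ => by simp [iterOp]⟩
  | succ k ih =>
    intro G hG
    obtain ⟨H, hH, h0, hs⟩ := ih (G := fun s => (2 * k + 3) * G s + s * deriv G s)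
      ((contDiff_const.mul hG).add (contDiff_id.mul (contDiff_infty_iff_deriv.1 hG).2))
    refine ⟨H, hH, ?_, fun s hs0 => ?_⟩
    · rw [h0, oddFactorial, oddFactorial, Finset.prod_range_succ]
      ring
    · rw [hshift, ← hs s hs0]
      refine iterOp_congr (fun s hs => ?_) k s hs0
      have h1 := (hasDerivAt_pow (2 * (k + 1) + 1) s).mul
        ((hG.differentiable (by simp)) s).hasDerivAt
      refine (congrArg (1 / s * ·) h1.deriv).trans ?_
      push_cast
      field_simp
      ring

/-! ### The equation satisfied by the wave integral -/

lemma smoothOnPos_waveInt (hn : 0 < n) {g : (𝔼 n) → ℝ} (hg : ContDiff ℝ (⊤ : ℕ∞) g) :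
    SmoothOnPos (waveInt kernel₀ g) := by
  refine SmoothOnPos.congr (H := fun x s => s ^ (n - 1) * scaledInt g (x, s)) ?_
    fun x s hs => waveInt_kernel₀ hn g x hs
  exact ((contDiff_snd.pow _).mul (contDiff_scaledInt hn hg)).contDiffOn

lemma integrable_scaledIntegrand (hn : 0 < n) {g : (𝔼 n) → ℝ} (hg : ContDiff ℝ (⊤ : ℕ∞) g)
    (q : (𝔼 n) × ℝ) :
    Integrable fun z : 𝔼 n => (√(1 - ‖z‖ ^ 2))⁻¹ • scaledIntegrand g (q, hemisphere z) :=
  integrable_smul_comp_of_isCompact (h := fun z => scaledIntegrand g (q, z))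
    (integrable_weight hn) measurable_hemisphere
    (isCompact_closedBall 0 1) hemisphere_mem
    ((contDiff_scaledIntegrand hg).continuous.comp (by fun_prop))

lemma isSpaceDeriv_waveInt (hn : 0 < n) {g : (𝔼 n) → ℝ} (hg : ContDiff ℝ (⊤ : ℕ∞) g) (v : 𝔼 n) :
    IsSpaceDeriv v (waveInt kernel₀ g) (waveInt kernel₀ fun z => fderiv ℝ g z v) := by
  intro x s hs
  simp only [waveInt_kernel₀ hn _ _ hs]
  refine HasDerivAt.const_mul _ ?_
  have hg' := contDiff_fderiv_apply hg v
  have hsm : ContDiff ℝ (⊤ : ℕ∞)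
      fun q : ℝ × ((𝔼 n) × ℝ) => scaledIntegrand g ((x + q.1 • v, s), q.2) :=
    (contDiff_scaledIntegrand hg).comp (by fun_prop)
  have h := (hasFDerivAt_integral_smul_comp (integrable_weight hn) measurable_hemisphere
    (isCompact_closedBall 0 1) hemisphere_mem (hsm.of_le (by simp)) (0 : ℝ)).hasDerivAt
  refine h.congr_deriv ?_
  have hfd (z : (𝔼 n) × ℝ) :
      fderiv ℝ (fun a : ℝ => scaledIntegrand g ((x + a • v, s), z)) 0
        = ContinuousLinearMap.toSpanSingleton ℝ
          (scaledIntegrand (fun y => fderiv ℝ g y v) ((x, s), z)) := by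
    have h1 : HasDerivAt (fun a : ℝ => x + a • v + s • z.1) v 0 := by
      simpa using (((hasDerivAt_id (0 : ℝ)).smul_const v).const_add x).add_const (s • z.1)
    have hd := hg.differentiable (by simp) (x + (0 : ℝ) • v + s • z.1)
    have h2 := (hd.hasFDerivAt.comp_hasDerivAt (0 : ℝ) h1).const_mul (cosh (1 / 2 * (s * z.2)))
    rw [zero_smul, add_zero] at h2
    exact h2.hasFDerivAt.fderiv
  simp only [hfd]
  rw [ContinuousLinearMap.integral_apply]
  · simp [scaledInt]
  · exact integrable_smul_comp_of_isCompact (integrable_weight hn) measurable_hemisphere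
      (isCompact_closedBall 0 1) hemisphere_mem
      (h := fun z => ContinuousLinearMap.toSpanSingleton ℝ
          (scaledIntegrand (fun y => fderiv ℝ g y v) ((x, s), z)))
      ((ContinuousLinearMap.toSpanSingletonCLE (𝕜 := ℝ)).continuous.comp
        ((contDiff_scaledIntegrand hg').continuous.comp (by fun_prop)))

lemma waveInt_kernel₀_fderivLap_eq_sum (hn : 0 < n) {g : (𝔼 n) → ℝ}
    (hg : ContDiff ℝ (⊤ : ℕ∞) g) (x : 𝔼 n) {s : ℝ} (hs : 0 < s) :
    waveInt kernel₀ (fderivLap g) x s = ∑ i : Fin n, waveInt kernel₀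
      (fun y => fderiv ℝ (fun z => fderiv ℝ g z (EuclideanSpace.single i 1)) y
        (EuclideanSpace.single i 1)) x s := by
  simp only [waveInt_kernel₀ hn _ _ hs, ← Finset.mul_sum, scaledInt]
  rw [← integral_finsetSum _ fun i _ => integrable_scaledIntegrand hn
    (contDiff_fderiv_apply (contDiff_fderiv_apply hg _) _) _]
  simp only [scaledIntegrand, fderivLap, smul_eq_mul, Finset.mul_sum]

lemma lap_iterOp_waveInt (hn : 0 < n) {g : (𝔼 n) → ℝ} (hg : ContDiff ℝ (⊤ : ℕ∞) g) (k : ℕ)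
    (x : 𝔼 n) {s : ℝ} (hs : 0 < s) :
    lap (fun z => iterOp k (waveInt kernel₀ g z) s) x
      = iterOp k (waveInt kernel₀ (fderivLap g) x) s := by
  have hg' (i : Fin n) := contDiff_fderiv_apply hg (EuclideanSpace.single i 1)
  rw [lap_eq_of_isSpaceDeriv
    (fun i => (isSpaceDeriv_waveInt hn hg (EuclideanSpace.single i 1)).iterOp_time
      (smoothOnPos_waveInt hn hg) k)
    (fun i => (isSpaceDeriv_waveInt hn (hg' i) (EuclideanSpace.single i 1)).iterOp_time
      (smoothOnPos_waveInt hn (hg' i)) k) x hs,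
    iterOp_congr (fun s hs => waveInt_kernel₀_fderivLap_eq_sum hn hg x hs) k s hs,
    iterOp_sum (fun i k s hs => (smoothOnPos_waveInt hn
      (contDiff_fderiv_apply (hg' i) _)).hasDerivAt_iterOp x k hs) k s hs]

lemma hasDerivAt_waveInt_kernels (hn : 0 < n) {g : (𝔼 n) → ℝ} (hg : ContDiff ℝ (⊤ : ℕ∞) g)
    (x : 𝔼 n) {s : ℝ} (hs : 0 < s) :
    HasDerivAt (waveInt kernel₁ g x) (2 * (s * waveInt kernel₀ g x s)) s ∧
    HasDerivAt (waveInt kernel₂ g x) (2 * (s * waveInt kernel₁ g x s)) s ∧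
    HasDerivAt (waveInt kernel₃ g x) (2 * (s * waveInt kernel₂ g x s)) s := by
  have h1 {s : ℝ} (hs : 0 < s) := isKernelPrimitive₁.hasDerivAt_waveInt hg.continuous x
    (fun s hs => ((smoothOnPos_waveInt hn hg).hasDerivAt x hs).continuousAt.continuousWithinAt) hs
  have h2 {s : ℝ} (hs : 0 < s) := isKernelPrimitive₂.hasDerivAt_waveInt hg.continuous x
    (fun s hs => (h1 hs).continuousAt.continuousWithinAt) hs
  exact ⟨h1 hs, h2 hs, isKernelPrimitive₃.hasDerivAt_waveInt hg.continuous x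
    (fun s hs => (h2 hs).continuousAt.continuousWithinAt) hs⟩

lemma deriv_eq_of_eq_on_pos {F G : ℝ → ℝ} (h : ∀ s, 0 < s → F s = G s) {F' G' s : ℝ} (hs : 0 < s)
    (hF : HasDerivAt F F' s) (hG : HasDerivAt G G' s) : F' = G' :=
  hF.unique (hG.congr_of_eventuallyEq (eventually_of_mem (Ioi_mem_nhds hs) h))

lemma waveInt_kernel₀_fderivLap (hn : 0 < n) {g : (𝔼 n) → ℝ} (hg : ContDiff ℝ (⊤ : ℕ∞) g)
    (x : 𝔼 n) {s : ℝ} (hs : 0 < s) :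
    waveInt kernel₀ (fderivLap g) x s = s ^ 2 * iterOp 2 (waveInt kernel₀ g x) s
      + (3 - n) * iterOp 1 (waveInt kernel₀ g x) s + -(1 / 4) * waveInt kernel₀ g x s := by
  have f (s : ℝ) (hs : 0 < s) := hasDerivAt_waveInt_kernels hn hg x hs
  have h (s : ℝ) (hs : 0 < s) := hasDerivAt_waveInt_kernels hn (contDiff_fderivLap hg) x hs
  have f0 (k : ℕ) (s : ℝ) (hs : 0 < s) :=
    (smoothOnPos_waveInt hn hg).hasDerivAt_iterOp x k hs
  have h2 (s : ℝ) (hs : 0 < s) : waveInt kernel₂ (fderivLap g) x s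
      = 4 * s ^ 2 * waveInt kernel₀ g x s - (2 * n + 2) * waveInt kernel₁ g x s
        - 1 / 4 * waveInt kernel₂ g x s := by
    have := deriv_eq_of_eq_on_pos (fun s _ => waveInt_kernel₃_fderivLap hg x s) hs (h s hs).2.2
      (((((hasDerivAt_pow 2 s).const_mul 4).mul (f s hs).1).sub
        ((f s hs).2.1.const_mul (2 * (n : ℝ) + 6))).sub ((f s hs).2.2.const_mul (1 / 4)))
    refine mul_left_cancel₀ hs.ne' ?_
    simp only [Nat.cast_ofNat] at this
    linear_combination this / 2
  have h1 (s : ℝ) (hs : 0 < s) : waveInt kernel₁ (fderivLap g) x s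
      = 2 * s ^ 2 * iterOp 1 (waveInt kernel₀ g x) s + (2 - 2 * n) * waveInt kernel₀ g x s
        - 1 / 4 * waveInt kernel₁ g x s := by
    have := deriv_eq_of_eq_on_pos h2 hs (h s hs).2.1
      (((((hasDerivAt_pow 2 s).const_mul 4).mul (f0 0 s hs)).sub
        ((f s hs).1.const_mul (2 * (n : ℝ) + 2))).sub ((f s hs).2.1.const_mul (1 / 4)))
    refine mul_left_cancel₀ hs.ne' ?_
    simp only [Nat.cast_ofNat, iterOp.eq_1] at this
    linear_combination this / 2
  have := deriv_eq_of_eq_on_pos h1 hs (h s hs).1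
    (((((hasDerivAt_pow 2 s).const_mul 2).mul (f0 1 s hs)).add
      ((f0 0 s hs).const_mul (2 - 2 * (n : ℝ)))).sub ((f s hs).1.const_mul (1 / 4)))
  refine mul_left_cancel₀ hs.ne' ?_
  simp only [Nat.cast_ofNat] at this
  linear_combination this / 2

/-- In dimension `2 * (k + 1)`, the function `w = ((1/t) ∂/∂t)^k` of the wave integral solves
`w_tt - Δ w = w / 4`. -/
lemma lap_iterOp_waveInt_even (k : ℕ) {g : (𝔼 (2 * (k + 1))) → ℝ} (hg : ContDiff ℝ (⊤ : ℕ∞) g)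
    (x : 𝔼 (2 * (k + 1))) {s : ℝ} (hs : 0 < s) :
    lap (fun z => iterOp k (waveInt kernel₀ g z) s) x
      = s ^ 2 * iterOp (k + 2) (waveInt kernel₀ g x) s + iterOp (k + 1) (waveInt kernel₀ g x) s
        - 1 / 4 * iterOp k (waveInt kernel₀ g x) s := by
  have hn : 0 < 2 * (k + 1) := by omega
  rw [lap_iterOp_waveInt hn hg k x hs, iterOp_of_eq_second_order
    (fun k s hs => (smoothOnPos_waveInt hn hg).hasDerivAt_iterOp x k hs)
    (fun s hs => waveInt_kernel₀_fderivLap hn hg x hs) k s hs]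
  push_cast
  ring

lemma setIntegral_closedBall_eq_waveInt (g : (𝔼 n) → ℝ) (x : 𝔼 n) {s : ℝ} (hs : 0 < s) :
    ∫ y in closedBall x s, (cosh (1 / 2 * √(s ^ 2 - ‖x - y‖ ^ 2)) / √(s ^ 2 - ‖x - y‖ ^ 2)) * g y
      = waveInt kernel₀ g x s := by
  rw [setIntegral_eq_integral_of_forall_compl_eq_zero, waveInt,
    ← integral_add_left_eq_self _ x]
  · refine integral_congr_ae (ae_of_all _ fun y => ?_)
    simp [kernel₀]
  · intro y hy
    rw [mem_closedBall, dist_comm, dist_eq_norm, not_le] at hy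
    rw [sqrt_eq_zero_of_nonpos (by nlinarith)]
    simp

end WaveIntegral

lemma two_mul_cnEven (k : ℕ) : 2 * cnEven (2 * (k + 1)) = ((2 * π) ^ (k + 1))⁻¹ := by
  rw [cnEven, show -(((2 * (k + 1) : ℕ) : ℝ) + 2) / 2 = -((k + 2 : ℕ) : ℝ) by push_cast; ring,
    show -((2 * (k + 1) : ℕ) : ℝ) / 2 = -((k + 1 : ℕ) : ℝ) by push_cast; ring,
    rpow_neg two_pos.le, rpow_neg pi_pos.le, rpow_natCast, rpow_natCast]
  field_simp
  ring
/-- For even `n` and smooth `g`, the function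
`u(x,t) = 2 c_n e^{-t/2} ((1/t)∂/∂t)^{(n-2)/2} ∫_{B_t(x)} cosh((1/2)√(t²−r²))/√(t²−r²) g(y) dy`
is smooth on `ℝⁿ × (0,∞)`, solves the damped wave equation there, and satisfies
`u(x,t) → 0` and `∂u/∂t(x,t) → g(x)` as `t → 0⁺`. -/
theorem damped_wave_solution_even_dim (n : ℕ) (hn : Even n) (hn0 : 0 < n)
    (g : EuclideanSpace ℝ (Fin n) → ℝ) (hg : ContDiff ℝ (⊤ : ℕ∞) g)
    (u : EuclideanSpace ℝ (Fin n) → ℝ → ℝ)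
    (hu : ∀ (x : EuclideanSpace ℝ (Fin n)) (t : ℝ), 0 < t →
      u x t = 2 * cnEven n * exp (-t / 2) *
        iterOp ((n - 2) / 2)
          (fun s => ∫ y in closedBall x s,
            (Real.cosh ((1 / 2) * Real.sqrt (s ^ 2 - ‖x - y‖ ^ 2)) /
              Real.sqrt (s ^ 2 - ‖x - y‖ ^ 2)) * g y) t) :
    ContDiffOn ℝ (⊤ : ℕ∞) (fun p : EuclideanSpace ℝ (Fin n) × ℝ => u p.1 p.2) (univ ×ˢ Ioi 0) ∧
    (∀ (x : EuclideanSpace ℝ (Fin n)) (t : ℝ), 0 < t →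
      deriv (deriv (fun s => u x s)) t - lap (fun z => u z t) x
        + deriv (fun s => u x s) t = 0) ∧
    (∀ x : EuclideanSpace ℝ (Fin n),
      Tendsto (fun t => u x t) (𝓝[>] 0) (𝓝 0) ∧
      Tendsto (fun t => deriv (fun s => u x s) t) (𝓝[>] 0) (𝓝 (g x))) := by
  obtain ⟨k, rfl⟩ : ∃ k, n = 2 * (k + 1) := by
    obtain ⟨m, rfl⟩ := hn
    exact ⟨m - 1, by omega⟩
  rw [show (2 * (k + 1) - 2) / 2 = k by omega] at hu
  set c := 2 * cnEven (2 * (k + 1)) with hc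
  set f := waveInt kernel₀ g
  have hsm : SmoothOnPos f := smoothOnPos_waveInt hn0 hg
  have hu' (x) (t : ℝ) (ht : 0 < t) : u x t = c * exp (-t / 2) * iterOp k (f x) t := by
    rw [hu x t ht, iterOp_congr (fun s hs => setIntegral_closedBall_eq_waveInt g x hs) k t ht]
  have hexp (t : ℝ) : HasDerivAt (fun t => c * exp (-t / 2)) (-(1 / 2) * (c * exp (-t / 2))) t := by
    refine ((((hasDerivAt_id t).neg.div_const 2).exp).const_mul c).congr_deriv ?_
    simp
    ring
  have hw (x) (j : ℕ) (t : ℝ) (ht : 0 < t) := hsm.hasDerivAt_iterOp x j ht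
  have hut (x) (t : ℝ) (ht : 0 < t) : deriv (fun s => u x s) t
      = c * exp (-t / 2) * (t * iterOp (k + 1) (f x) t - 1 / 2 * iterOp k (f x) t) := by
    rw [EventuallyEq.deriv_eq (eventually_of_mem (Ioi_mem_nhds ht) (hu' x))]
    refine ((hexp t).mul (hw x k t ht)).deriv.trans ?_
    ring
  refine ⟨?_, fun x t ht => ?_, fun x => ?_⟩
  · refine SmoothOnPos.congr (H := fun x t => c * exp (-t / 2) * iterOp k (f x) t) ?_ hu'
    exact (smoothOnPos_of_contDiffOn (by fun_prop)).mul (hsm.iterOp_time k)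
  · have hutt : deriv (deriv fun s => u x s) t = c * exp (-t / 2) *
        (t ^ 2 * iterOp (k + 2) (f x) t + (1 - t) * iterOp (k + 1) (f x) t
          + 1 / 4 * iterOp k (f x) t) := by
      rw [EventuallyEq.deriv_eq (eventually_of_mem (Ioi_mem_nhds ht) (hut x))]
      refine ((hexp t).mul (((hasDerivAt_id t).mul (hw x (k + 1) t ht)).sub
        ((hw x k t ht).const_mul (1 / 2)))).deriv.trans ?_
      simp only [id, Pi.sub_apply, Pi.mul_apply]
      ring
    have hlap : lap (fun z => u z t) x
        = c * exp (-t / 2) * lap (fun z => iterOp k (f z) t) x := by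
      rw [show (fun z => u z t) = _ from funext fun z => hu' z t ht, lap, lap, Finset.mul_sum]
      refine Finset.sum_congr rfl fun i _ => ?_
      rw [iteratedDeriv_const_mul_field]
    rw [hutt, hlap, hut x t ht, lap_iterOp_waveInt_even k hg x ht]
    ring
  · obtain ⟨G, hG, hG0, hGs⟩ := iterOp_pow_mul k (G := fun s => scaledInt g (x, s))
      ((contDiff_scaledInt hn0 hg).comp (by fun_prop))
    have huG (t : ℝ) (ht : 0 < t) : u x t = c * exp (-t / 2) * (t * G t) := by
      rw [hu' x t ht, ← hGs t ht, iterOp_congr (fun s hs => waveInt_kernel₀ hn0 g x hs) k t ht]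
      rfl
    have hcG : c * G 0 = g x := by
      rw [hG0, scaledInt_zero, integral_weight, hc, two_mul_cnEven]
      have := (oddFactorial_pos k).ne'
      field_simp
    have hsmooth : ContDiff ℝ (⊤ : ℕ∞) fun t => c * exp (-t / 2) * (t * G t) := by fun_prop
    constructor
    · have h := (hsmooth.continuous.tendsto 0).mono_left (nhdsWithin_le_nhds (s := Ioi 0))
      simp only [zero_mul, mul_zero] at h
      exact h.congr' (eventually_of_mem self_mem_nhdsWithin fun t ht => (huG t ht).symm)
    · have h := ((hsmooth.continuous_deriv (by simp)).tendsto 0).mono_left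
        (nhdsWithin_le_nhds (s := Ioi 0))
      have h0 : deriv (fun t => c * exp (-t / 2) * (t * G t)) 0 = g x := by
        refine ((hexp 0).mul ((hasDerivAt_id 0).mul
          (hG.differentiable (by simp) 0).hasDerivAt)).deriv.trans ?_
        simp [hcG]
      rw [h0] at h
      refine h.congr' (eventually_of_mem self_mem_nhdsWithin fun t ht => ?_)
      exact (EventuallyEq.deriv_eq (eventually_of_mem (Ioi_mem_nhds ht) huG)).symm
end
end
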